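/- arXiv:2006.15287 — 4 statements merged into one kernel-verified Lean document; each statement's English description precedes it below -/
import Mathlib

section
/- Let L, s and k be positive integers with L ≥ 3 and s+1 ≤ k ≤ L+s. Then for every integer N ≥ Γ(s), the number of partitions of N lying in I_{L,s,k} is strictly greater than the number of partitions of N lying in D_{L,s}. -/
/-- `D_{L,s}`: nonempty partitions with all parts in `{s+1, ..., L+s}`. -/
def InD (L s : ℕ) {N : ℕ} (p : N.Partition) : Prop :=
  p.parts ≠ 0 ∧ ∀ x ∈ p.parts, s + 1 ≤ x ∧ x ≤ L + s

/-- `I_{L,s,k}`: partitions with smallest part `s`, all parts `≤ L+s`, and no part equal to `k`. -/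
def InI (L s k : ℕ) {N : ℕ} (p : N.Partition) : Prop :=
  s ∈ p.parts ∧ (∀ x ∈ p.parts, s ≤ x ∧ x ≤ L + s) ∧ k ∉ p.parts

/-- `P_{L,s} = (s+1)(s+2)⋯(s+L)`. -/
def prodP (L s : ℕ) : ℕ := ∏ i ∈ Finset.range L, (s + 1 + i)

/-- `γ(L,s)`. -/
def gammaLS (L s : ℕ) : ℕ :=
  (∑ i ∈ Finset.range L, (s + 1 + i)) *
    (prodP L s ^ ((prodP L s ^ 2 - 1) * L + 2) + ((prodP L s ^ 2 - 1) * L - 2) * prodP L s)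

/-- `Γ(s) = γ(3s+2, s)`. -/
def GammaS (s : ℕ) : ℕ := gammaLS (3 * s + 2) s

/- Removing the parts common to both sides turns the claim into a comparison of the coefficients of
`F * G` and `H * G`, where `F` and `H` count partitions into two or three parts and `G` counts the
partitions with parts in an arbitrary set. The `n`-th coefficient of `H` exceeds that of `F` by at
least `n / K - K`, so it suffices that the sizes `i ≤ N`, weighted by the coefficients `g i` of `G`,
have average less than `N - K ^ 2`. This holds because `g n` is at most twice the sum of the `g i`
with `i ≤ n - B` as soon as `n ≥ B ^ 3`, so that the sizes close to `N` cannot dominate; the bound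
is uniform in the set of parts, which is why the threshold does not depend on `L`. -/

open Finset PowerSeries

section PartitionSeries

variable {S T : Set ℕ} {n : ℕ}

open scoped Classical in
/-- The generating function of the partitions with all parts in `S`. -/
noncomputable def partitionSeries (S : Set ℕ) : ℕ⟦X⟧ :=
  PowerSeries.mk fun n ↦ #(Nat.Partition.restricted n (· ∈ S))

theorem coeff_partitionSeries (S : Set ℕ) [DecidablePred (· ∈ S)] (n : ℕ) :
    coeff n (partitionSeries S) = #{p : n.Partition | ∀ x ∈ p.parts, x ∈ S} := by
  rw [partitionSeries, coeff_mk, Nat.Partition.restricted]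
  congr!

open scoped PowerSeries.WithPiTopology Classical in
theorem partitionSeries_union (h : Disjoint S T) :
    partitionSeries (S ∪ T) = partitionSeries S * partitionSeries T := by
  have hasProd_series (U : Set ℕ) :=
    Nat.Partition.hasProd_powerSeriesMk_card_restricted ℕ (· ∈ U)
  refine (hasProd_series (S ∪ T)).unique
    (((hasProd_series S).mul (hasProd_series T)).congr_fun fun i ↦ ?_)
  have hnot_both : i + 1 ∈ S → i + 1 ∉ T := fun hS ↦ Set.disjoint_left.1 h hS
  by_cases hS : i + 1 ∈ S <;> by_cases hT : i + 1 ∈ T <;> simp_all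

theorem partitionSeries_insert {d : ℕ} (hd : d ∉ S) :
    partitionSeries (insert d S) = partitionSeries {d} * partitionSeries S := by
  rw [Set.insert_eq, partitionSeries_union (Set.disjoint_singleton_left.2 hd)]

theorem partition_count_mul_le (p : n.Partition) (b : ℕ) : p.parts.count b * b ≤ n := by
  obtain ⟨μ, hμ⟩ := Multiset.le_iff_exists_add.1
    (Multiset.le_count_iff_replicate_le.1 (le_refl (p.parts.count b)))
  have hsum := p.parts_sum
  rw [hμ, Multiset.sum_add, Multiset.sum_replicate, smul_eq_mul] at hsum
  exact le_of_add_le_left hsum.le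

theorem card_partitions_le_count [DecidablePred (· ∈ S)] {b : ℕ} (hb : 0 < b) (hbS : b ∈ S)
    (m n : ℕ) :
    #{p : n.Partition | (∀ x ∈ p.parts, x ∈ S) ∧ m ≤ p.parts.count b} =
      coeff n (X ^ (b * m) * partitionSeries S) := by
  rw [coeff_X_pow_mul', coeff_partitionSeries]
  split_ifs with hmn
  · symm
    refine card_bij (fun q _ ↦ ⟨q.parts + Multiset.replicate m b, ?_, ?_⟩) ?_ ?_ ?_
    · intro x hx
      rcases Multiset.mem_add.1 hx with hx | hx
      · exact q.parts_pos hx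
      · rwa [Multiset.eq_of_mem_replicate hx]
    · rw [Multiset.sum_add, q.parts_sum, Multiset.sum_replicate, smul_eq_mul, mul_comm m,
        Nat.sub_add_cancel hmn]
    · intro q hq
      simp only [mem_filter_univ, Multiset.mem_add, Multiset.count_add,
        Multiset.count_replicate_self] at hq ⊢
      refine ⟨fun x hx ↦ hx.elim (hq x) fun hx ↦ ?_, by omega⟩
      rwa [Multiset.eq_of_mem_replicate hx]
    · intro q _ q' _ h
      exact Nat.Partition.ext (add_right_cancel (congrArg Nat.Partition.parts h))
    · intro p hp
      simp only [mem_filter_univ] at hp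
      obtain ⟨μ, hμ⟩ :=
        Multiset.le_iff_exists_add.1 (Multiset.le_count_iff_replicate_le.1 hp.2)
      have hsum := p.parts_sum
      rw [hμ, Multiset.sum_add, Multiset.sum_replicate, smul_eq_mul, mul_comm m] at hsum
      have hmem {x : ℕ} (hx : x ∈ μ) : x ∈ p.parts := hμ ▸ Multiset.mem_add.2 (.inr hx)
      refine ⟨⟨μ, fun hx ↦ p.parts_pos (hmem hx), by omega⟩, ?_, ?_⟩
      · simpa only [mem_filter_univ] using fun x hx ↦ hp.1 x (hmem hx)
      · exact Nat.Partition.ext ((add_comm _ _).trans hμ.symm)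
  · rw [card_eq_zero, filter_eq_empty_iff]
    rintro p - ⟨-, hp⟩
    exact hmn <| (mul_comm b m).trans_le <|
      (Nat.mul_le_mul_right b hp).trans (partition_count_mul_le p b)

theorem coeff_partitionSeries_singleton {d : ℕ} (hd : 0 < d) (n : ℕ) :
    coeff n (partitionSeries {d}) = if d ∣ n then 1 else 0 := by
  have eq_replicate {p : n.Partition} (hp : ∀ x ∈ p.parts, x ∈ ({d} : Set ℕ)) :
      p.parts = Multiset.replicate (n / d) d := by
    have hparts := Multiset.eq_replicate_card.2 hp
    have hsum := p.parts_sum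
    rw [hparts, Multiset.sum_replicate, smul_eq_mul] at hsum
    rwa [Nat.div_eq_of_eq_mul_left hd hsum.symm]
  rw [coeff_partitionSeries]
  split_ifs with hdn
  · refine card_eq_one.2 ⟨⟨Multiset.replicate (n / d) d, fun hx ↦ ?_, ?_⟩, ?_⟩
    · rwa [Multiset.eq_of_mem_replicate hx]
    · rw [Multiset.sum_replicate, smul_eq_mul, Nat.div_mul_cancel hdn]
    · ext p
      rw [mem_filter_univ, mem_singleton]
      refine ⟨fun hp ↦ Nat.Partition.ext (eq_replicate hp), ?_⟩
      rintro rfl x hx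
      exact Multiset.eq_of_mem_replicate hx
  · rw [card_eq_zero, filter_eq_empty_iff]
    intro p _ hp
    have hsum := p.parts_sum
    rw [eq_replicate hp, Multiset.sum_replicate, smul_eq_mul] at hsum
    exact hdn (hsum ▸ dvd_mul_left d _)

theorem partitionSeries_singleton_eq_one_add {d : ℕ} (hd : 0 < d) :
    partitionSeries {d} = 1 + X ^ d * partitionSeries {d} := by
  ext n
  rw [map_add, coeff_one, coeff_X_pow_mul', coeff_partitionSeries_singleton hd,
    coeff_partitionSeries_singleton hd]
  rcases n.eq_zero_or_pos with rfl | hn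
  · simp [hd.ne']
  · by_cases hdn : d ≤ n
    · simp [hn.ne', hdn, Nat.dvd_sub_iff_left hdn dvd_rfl]
    · have : ¬ d ∣ n := fun h ↦ hdn (Nat.le_of_dvd hn h)
      simp [hn.ne', hdn, this]

theorem partitionSeries_singleton_mul_eq {d : ℕ} (hd : 0 < d) (F : ℕ⟦X⟧) (N : ℕ) :
    partitionSeries {d} * F =
      ∑ j ∈ range N, X ^ (d * j) * F + X ^ (d * N) * (partitionSeries {d} * F) := by
  induction N with
  | zero => simp
  | succ N ih =>
    conv_lhs => rw [ih, partitionSeries_singleton_eq_one_add hd]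
    rw [sum_range_succ]
    ring

theorem coeff_partitionSeries_singleton_mul {d : ℕ} (hd : 0 < d) (F : ℕ⟦X⟧) (n : ℕ) :
    coeff n (partitionSeries {d} * F) = ∑ j ∈ range (n + 1), coeff n (X ^ (d * j) * F) := by
  have hn : ¬ d * (n + 1) ≤ n := by nlinarith
  rw [partitionSeries_singleton_mul_eq hd F (n + 1), map_add, map_sum, coeff_X_pow_mul' _ (d * _),
    if_neg hn, add_zero]

theorem coeff_zero_partitionSeries (S : Set ℕ) : coeff 0 (partitionSeries S) = 1 := by
  classical
  rw [coeff_partitionSeries, filter_true_of_mem (by simp), card_univ, Fintype.card_unique]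

end PartitionSeries

theorem multiset_sum_lt_pow_three {B : ℕ} (hB : 0 < B) {μ : Multiset ℕ}
    (hμ : ∀ b ∈ μ, b < B ∧ μ.count b < B) : μ.sum < B ^ 3 := by
  have hsub : μ.toFinset ⊆ range B := fun b hb ↦
    Finset.mem_range.2 (hμ b (Multiset.mem_toFinset.1 hb)).1
  calc μ.sum = ∑ b ∈ μ.toFinset, μ.count b • b := Finset.sum_multiset_count μ
    _ ≤ #μ.toFinset • (B * (B - 1)) := sum_le_card_nsmul _ _ _ fun b hb ↦ by
        obtain ⟨hb, hcount⟩ := hμ b (Multiset.mem_toFinset.1 hb)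
        exact Nat.mul_le_mul hcount.le (Nat.le_sub_one_of_lt hb)
    _ ≤ B * (B * (B - 1)) := Nat.mul_le_mul_right _ ((card_le_card hsub).trans_eq (card_range B))
    _ < B * (B * B) := by gcongr; omega
    _ = B ^ 3 := by ring

open scoped Classical in
theorem card_partitions_exists_le_count_le (S : Set ℕ) {m : ℕ} (hm : 0 < m) (n i : ℕ) :
    #{p : n.Partition | (∀ x ∈ p.parts, x ∈ S) ∧ ∃ b, b * m + i = n ∧ m ≤ p.parts.count b} ≤
      coeff i (partitionSeries S) := by
  rcases eq_empty_or_nonempty {p : n.Partition | (∀ x ∈ p.parts, x ∈ S) ∧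
    ∃ b, b * m + i = n ∧ m ≤ p.parts.count b} with hempty | ⟨p, hp⟩
  · simp only [hempty, card_empty, zero_le]
  obtain ⟨hpS, b, hbn, hpb⟩ := (mem_filter_univ _).1 hp
  have hb : b ∈ p.parts := Multiset.count_pos.1 (hm.trans_le hpb)
  calc _ ≤ #{p : n.Partition | (∀ x ∈ p.parts, x ∈ S) ∧ m ≤ p.parts.count b} := by
        refine card_le_card (monotone_filter_right _ fun q _ ⟨hqS, b', hbn', hqb⟩ ↦ ⟨hqS, ?_⟩)
        rwa [Nat.eq_of_mul_eq_mul_right hm (add_right_cancel (hbn.trans hbn'.symm))]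
    _ = coeff n (X ^ (b * m) * partitionSeries S) :=
        card_partitions_le_count (p.parts_pos hb) (hpS b hb) m n
    _ = coeff i (partitionSeries S) := by rw [← hbn, add_comm, coeff_X_pow_mul]

/- A partition of `n ≥ B ^ 3` has a part `b ≥ B` or a part `b` repeated at least `B` times. Removing
one copy of `b`, respectively `B` copies, leaves a partition of some `i ≤ n - B`, and `i` determines
`b`; so each `i` is reached at most `coeff i (partitionSeries S)` times in either way. -/
theorem coeff_partitionSeries_le_two_mul_sum (S : Set ℕ) {B n : ℕ} (hB : 0 < B)
    (hn : B ^ 3 ≤ n) :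
    coeff n (partitionSeries S) ≤
      2 * ∑ i ∈ range (n - B + 1), coeff i (partitionSeries S) := by
  classical
  let repeated (m i : ℕ) : Finset n.Partition :=
    {p | (∀ x ∈ p.parts, x ∈ S) ∧ ∃ b, b * m + i = n ∧ m ≤ p.parts.count b}
  have mem_biUnion_repeated {p : n.Partition} (hpS : ∀ x ∈ p.parts, x ∈ S) {b m : ℕ}
      (hBm : B ≤ b * m) (hm : m ≤ p.parts.count b) :
      p ∈ (range (n - B + 1)).biUnion (repeated m) := by
    have hbm : b * m ≤ n := (mul_comm b m).trans_le
      ((Nat.mul_le_mul_right b hm).trans (partition_count_mul_le p b))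
    exact mem_biUnion.2 ⟨n - b * m, Finset.mem_range.2 (by omega),
      (mem_filter_univ _).2 ⟨hpS, b, Nat.add_sub_cancel' hbm, hm⟩⟩
  have hcover : ({p : n.Partition | ∀ x ∈ p.parts, x ∈ S} : Finset n.Partition) ⊆
      (range (n - B + 1)).biUnion (repeated 1) ∪ (range (n - B + 1)).biUnion (repeated B) := by
    intro p hp
    have hpS := (mem_filter_univ _).1 hp
    obtain ⟨b, hb, hBb⟩ : ∃ b ∈ p.parts, b < B → B ≤ p.parts.count b := by
      by_contra! hsmall
      exact ((multiset_sum_lt_pow_three hB hsmall).trans_le hn).ne p.parts_sum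
    rw [mem_union]
    rcases le_or_gt B b with hle | hlt
    · exact .inl (mem_biUnion_repeated hpS (by rwa [mul_one]) (Multiset.count_pos.2 hb))
    · exact .inr (mem_biUnion_repeated hpS (Nat.le_mul_of_pos_left B (p.parts_pos hb)) (hBb hlt))
  have card_biUnion_le_sum {m : ℕ} (hm : 0 < m) :
      #((range (n - B + 1)).biUnion (repeated m)) ≤
        ∑ i ∈ range (n - B + 1), coeff i (partitionSeries S) :=
    card_biUnion_le.trans <| sum_le_sum fun i _ ↦ card_partitions_exists_le_count_le S hm n i
  rw [coeff_partitionSeries, two_mul]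
  exact (card_le_card hcover).trans <| (card_union_le _ _).trans <|
    add_le_add (card_biUnion_le_sum one_pos) (card_biUnion_le_sum hB)

theorem mul_sum_coeff_lt_sum_coeff_mul_sub (S : Set ℕ) {c N : ℕ}
    (hN : (2 * c ^ 2 + c + 1) ^ 3 + c ≤ N) :
    c * ∑ i ∈ range (N + 1), coeff i (partitionSeries S) <
      ∑ i ∈ range (N + 1), coeff i (partitionSeries S) * (N - i) := by
  set B := 2 * c ^ 2 + c + 1
  set p : ℕ → ℕ := fun i ↦ coeff i (partitionSeries S) with hp
  have hBN : B ≤ B ^ 3 := Nat.le_self_pow three_ne_zero B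
  obtain ⟨M, rfl⟩ : ∃ M, N = M + (2 * c ^ 2 + 1) + c := ⟨N - B, by omega⟩
  have hsum_pos : 0 < ∑ i ∈ range (M + 1), p i := by
    refine sum_pos' (fun _ _ ↦ zero_le) ⟨0, by simp, ?_⟩
    simp only [hp, coeff_zero_partitionSeries, one_pos]
  have mul_sum_le {w : ℕ} {s : Finset ℕ} {f g : ℕ → ℕ} (hw : ∀ i ∈ s, w ≤ g i) :
      w * ∑ i ∈ s, f i ≤ ∑ i ∈ s, f i * g i :=
    (mul_sum _ _ _).trans_le <| sum_le_sum fun i hi ↦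
      (mul_comm _ _).trans_le (Nat.mul_le_mul_left _ (hw i hi))
  have initial : (2 * c ^ 2 + 1 + c) * ∑ i ∈ range (M + 1), p i ≤
      ∑ i ∈ range (M + 1), p i * (M + (2 * c ^ 2 + 1) + c - i) :=
    mul_sum_le fun i hi ↦ by have := Finset.mem_range.1 hi; omega
  have middle : c * ∑ i ∈ range (2 * c ^ 2 + 1), p (M + 1 + i) ≤
      ∑ i ∈ range (2 * c ^ 2 + 1), p (M + 1 + i) * (M + (2 * c ^ 2 + 1) + c - (M + 1 + i)) :=
    mul_sum_le fun i hi ↦ by have := Finset.mem_range.1 hi; omega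
  have final : ∑ i ∈ range c, p (M + 1 + (2 * c ^ 2 + 1) + i) ≤
      c * (2 * ∑ i ∈ range (M + 1), p i) := by
    refine (sum_le_card_nsmul _ _ _ fun i hi ↦ ?_).trans_eq (by rw [card_range, smul_eq_mul])
    have := Finset.mem_range.1 hi
    refine (coeff_partitionSeries_le_two_mul_sum S (B := B) (by omega) (by omega)).trans ?_
    gcongr
    omega
  change c * ∑ i ∈ _, p i < ∑ i ∈ _, p i * _
  rw [show M + (2 * c ^ 2 + 1) + c + 1 = M + 1 + (2 * c ^ 2 + 1) + c by ring]
  simp_rw [sum_range_add _ (M + 1 + (2 * c ^ 2 + 1)) c, sum_range_add _ (M + 1) (2 * c ^ 2 + 1)]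
  refine lt_of_lt_of_le ?_ (Nat.le_add_right _ _)
  linarith [Nat.mul_le_mul_left c final]

/-- `coeff n H - coeff n F` grows at least linearly, which survives multiplying both series by a
`partitionSeries`: it is at least `n / K - K`, written here without division and subtraction. -/
def HasLinearGap (K : ℕ) (F H : ℕ⟦X⟧) : Prop :=
  ∀ n, n + K * coeff n F ≤ K * coeff n H + K ^ 2

namespace HasLinearGap

variable {K K' N : ℕ} {F H : ℕ⟦X⟧}

theorem pos (h : HasLinearGap K F H) : 0 < K :=
  Nat.pos_of_ne_zero fun hK ↦ by simpa only [hK, zero_mul, add_zero, zero_add, zero_pow two_ne_zero,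
    nonpos_iff_eq_zero, one_ne_zero] using h 1

theorem mono (h : HasLinearGap K F H) (hK : K ≤ K') : HasLinearGap K' F H := by
  intro n
  have hn := h n
  have hF : coeff n F ≤ coeff n H + K := Nat.le_of_mul_le_mul_left (by linarith) h.pos
  obtain ⟨δ, rfl⟩ := Nat.exists_eq_add_of_le hK
  nlinarith [Nat.mul_le_mul_left δ hF]

theorem coeff_mul_partitionSeries_lt (h : HasLinearGap K F H) (S : Set ℕ)
    (hN : 65 * K ^ 12 ≤ N) :
    coeff N (F * partitionSeries S) < coeff N (H * partitionSeries S) := by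
  have coeff_mul_eq (E : ℕ⟦X⟧) : coeff N (E * partitionSeries S) =
      ∑ i ∈ range (N + 1), coeff i (partitionSeries S) * coeff (N - i) E := by
    rw [mul_comm, coeff_mul, Nat.sum_antidiagonal_eq_sum_range_succ
      fun i j ↦ coeff i (partitionSeries S) * coeff j E]
  have haverage := mul_sum_coeff_lt_sum_coeff_mul_sub S (c := K ^ 2) (N := N) <|
    calc (2 * (K ^ 2) ^ 2 + K ^ 2 + 1) ^ 3 + K ^ 2
        ≤ (2 * (K ^ 2) ^ 2 + K ^ 4 + K ^ 4) ^ 3 + K ^ 12 := by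
          gcongr <;> first | exact h.pos | exact Nat.one_le_pow _ _ h.pos | norm_num
      _ = 65 * K ^ 12 := by ring
      _ ≤ N := hN
  have hgap : ∑ i ∈ range (N + 1), coeff i (partitionSeries S) * (N - i) +
      K * coeff N (F * partitionSeries S) ≤
      K * coeff N (H * partitionSeries S) +
        K ^ 2 * ∑ i ∈ range (N + 1), coeff i (partitionSeries S) := by
    simp only [coeff_mul_eq, mul_sum, ← sum_add_distrib]
    exact sum_le_sum fun i _ ↦ by
      linarith [Nat.mul_le_mul_left (coeff i (partitionSeries S)) (h (N - i))]
  exact lt_of_mul_lt_mul_left (by linarith) (Nat.zero_le K)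

end HasLinearGap

/-- `coeff n Q` stays within `1` of `n / p`, written here without division and subtraction. -/
def HasLinearCoeff (p : ℕ) (Q : ℕ⟦X⟧) : Prop :=
  ∀ n, n ≤ p * coeff n Q + p ∧ p * coeff n Q ≤ n + p

theorem coeff_partitionSeries_singleton_mul_singleton {a b : ℕ} (ha : 0 < a) (hb : 0 < b)
    (hab : a.Coprime b) (n : ℕ) :
    coeff n (partitionSeries {a} * partitionSeries {b}) =
      Nat.count (· ≡ Nat.chineseRemainder hab 0 n [MOD a * b]) (n + 1) := by
  rw [coeff_mul, Nat.sum_antidiagonal_eq_sum_range_succ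
    fun i j ↦ coeff i (partitionSeries {a}) * coeff j (partitionSeries {b}),
    Nat.count_eq_card_filter_range, card_filter]
  refine sum_congr rfl fun i hi ↦ ?_
  have hin : i ≤ n := Nat.le_of_lt_succ (Finset.mem_range.1 hi)
  have hiff : i ≡ Nat.chineseRemainder hab 0 n [MOD a * b] ↔ a ∣ i ∧ b ∣ n - i := by
    obtain ⟨hva, hvb⟩ := (Nat.chineseRemainder hab 0 n).2
    rw [← Nat.modEq_and_modEq_iff_modEq_mul hab, ← Nat.modEq_zero_iff_dvd,
      ← Nat.modEq_iff_dvd' hin]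
    exact and_congr ⟨(·.trans hva), (·.trans hva.symm)⟩ ⟨(·.trans hvb), (·.trans hvb.symm)⟩
  simp only [coeff_partitionSeries_singleton ha, coeff_partitionSeries_singleton hb, hiff,
    ite_and, ite_mul, one_mul, zero_mul]

theorem hasLinearCoeff_singleton_mul_singleton {a b : ℕ} (ha : 0 < a) (hb : 0 < b)
    (hab : a.Coprime b) :
    HasLinearCoeff (a * b) (partitionSeries {a} * partitionSeries {b}) := by
  intro n
  rw [coeff_partitionSeries_singleton_mul_singleton ha hb hab,
    Nat.count_modEq_card _ (Nat.mul_pos ha hb), mul_add]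
  have hdiv := Nat.div_add_mod (n + 1) (a * b)
  have hmod := Nat.mod_lt (n + 1) (Nat.mul_pos ha hb)
  split_ifs <;> constructor <;> omega

namespace HasLinearCoeff

variable {p : ℕ} {Q : ℕ⟦X⟧}

theorem le_mul_coeff_X_pow_mul (hQ : HasLinearCoeff p Q) (m n : ℕ) :
    n ≤ p * coeff n (X ^ m * Q) + p + m := by
  rw [coeff_X_pow_mul']
  split_ifs with hmn
  · have := (hQ (n - m)).1
    omega
  · omega

theorem mul_coeff_X_pow_mul_le (hQ : HasLinearCoeff p Q) {m n : ℕ} (hmn : m ≤ n) :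
    p * coeff n (X ^ m * Q) + m ≤ n + p := by
  rw [coeff_X_pow_mul', if_pos hmn]
  have := (hQ (n - m)).2
  omega

end HasLinearCoeff

theorem hasLinearGap_singleton_mul_singleton {s k a : ℕ} (hs : 0 < s) (hsk : s < k) (ha : 1 < a)
    (hsa : s.Coprime a) (hka : k.Coprime a) :
    HasLinearGap (s * k * a) (partitionSeries {k} * partitionSeries {a})
      (X ^ s * (partitionSeries {s} * partitionSeries {a})) := by
  intro n
  have lower := (hasLinearCoeff_singleton_mul_singleton hs (zero_lt_one.trans ha)
    hsa).le_mul_coeff_X_pow_mul s n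
  have upper := (hasLinearCoeff_singleton_mul_singleton (hs.trans hsk) (zero_lt_one.trans ha)
    hka n).2
  set h := coeff n (X ^ s * (partitionSeries {s} * partitionSeries {a}))
  set f := coeff n (partitionSeries {k} * partitionSeries {a})
  have hslope : s * n + n ≤ k * n := by nlinarith
  have hconst : k * s + 2 * (s * k * a) ≤ (s * k * a) ^ 2 := by
    have hsk2 : 2 ≤ s * k := by nlinarith
    have : s * k * 2 ≤ s * k * a := Nat.mul_le_mul_left _ ha
    nlinarith
  linarith [Nat.mul_le_mul_left k lower, Nat.mul_le_mul_left s upper]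

theorem two_mul_sub_sq_le_two_mul_sum (x : ℕ) (D : ℤ) :
    2 * x - (D + 2) ^ 2 ≤ 2 * ∑ j ∈ range x, (j - D) := by
  have sum_eq : 2 * ∑ j ∈ range x, (j - D) = x * (x - 1 - 2 * D) := by
    induction x with
    | zero => simp
    | succ x ih => rw [sum_range_succ, mul_add, ih]; push_cast; ring
  rw [sum_eq]
  nlinarith [sq_nonneg (x - (D + 2))]

theorem HasLinearCoeff.sub_le_mul_coeff_sub {s k p n j : ℕ} {Q : ℕ⟦X⟧}
    (hQ : HasLinearCoeff p Q) (hsk : s < k) (hj : (s + 1) * j ≤ n) :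
    (j - (s + 2 * p) : ℤ) ≤
      p * ((coeff n (X ^ (s * j) * (X ^ s * Q)) : ℕ) - (coeff n (X ^ (k * j) * Q) : ℕ)) := by
  have lower := hQ.le_mul_coeff_X_pow_mul (s * j + s) n
  have upper : p * coeff n (X ^ (k * j) * Q) + (s + 1) * j ≤ n + p := by
    rcases le_or_gt (k * j) n with hkj | hkj
    · linarith [hQ.mul_coeff_X_pow_mul_le hkj, Nat.mul_le_mul_right j (Nat.succ_le_of_lt hsk)]
    · rw [coeff_X_pow_mul', if_neg hkj.not_ge]
      linarith
  rw [pow_add, mul_assoc] at lower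
  zify at lower upper
  linarith

theorem hasLinearGap_singleton_mul {s k p : ℕ} {Q : ℕ⟦X⟧} (hs : 0 < s) (hsk : s < k)
    (hp : s + 2 ≤ p) (hQ : HasLinearCoeff p Q) :
    HasLinearGap (p * (s + 4)) (partitionSeries {k} * Q) (X ^ s * (partitionSeries {s} * Q)) := by
  intro n
  set x := n / (s + 1) + 1
  have hxn : n < (s + 1) * x := Nat.lt_mul_div_succ n s.succ_pos
  have sum_le : ∑ j ∈ range x, (j - (s + 2 * p) : ℤ) ≤
      p * ((coeff n (X ^ s * (partitionSeries {s} * Q)) : ℕ) -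
        (coeff n (partitionSeries {k} * Q) : ℕ)) := by
    rw [mul_left_comm, coeff_partitionSeries_singleton_mul (hs.trans hsk),
      coeff_partitionSeries_singleton_mul hs]
    push_cast
    rw [← sum_sub_distrib, mul_sum]
    refine (sum_le_sum fun j hj ↦ hQ.sub_le_mul_coeff_sub hsk ?_).trans
      (sum_le_sum_of_subset_of_nonneg (range_mono (Nat.succ_le_succ (Nat.div_le_self _ _)))
        fun j _ hj ↦ ?_)
    · rw [mul_comm]
      exact (Nat.le_div_iff_mul_le s.succ_pos).1 (Nat.le_of_lt_succ (Finset.mem_range.1 hj))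
    · have hkj : n < k * j := hxn.trans_le
        (Nat.mul_le_mul hsk (Nat.le_of_not_lt fun h ↦ hj (Finset.mem_range.2 h)))
      rw [coeff_X_pow_mul' _ (k * j), if_neg hkj.not_ge, Nat.cast_zero, sub_zero]
      positivity
  have hquad := two_mul_sub_sq_le_two_mul_sum x (s + 2 * p)
  have hlin : 2 * x - 9 * p ^ 2 ≤ 2 * (p * ((coeff n (X ^ s * (partitionSeries {s} * Q)) : ℕ) -
      (coeff n (partitionSeries {k} * Q) : ℕ)) : ℤ) := by
    zify at hp
    nlinarith
  have hconst : 9 * p ^ 2 * (s + 4) ≤ 2 * (p * (s + 4)) ^ 2 := by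
    calc 9 * p ^ 2 * (s + 4) ≤ (2 * (s + 4)) * p ^ 2 * (s + 4) := by gcongr; omega
      _ = 2 * (p * (s + 4)) ^ 2 := by ring
  zify at hxn hconst ⊢
  linarith [mul_le_mul_of_nonneg_left hlin (by positivity : (0 : ℤ) ≤ s + 4)]

theorem exists_subset_hasLinearGap {L s k : ℕ} (hs : 0 < s) (hL : 3 ≤ L) (hk : s + 1 ≤ k) :
    ∃ A ⊆ Set.Icc (s + 1) (L + s) \ {k}, HasLinearGap ((s + 4) ^ 3)
      (partitionSeries {k} * partitionSeries A)
      (X ^ s * (partitionSeries {s} * partitionSeries A)) := by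
  have hasLinearGap_pair {a : ℕ} (ha : s + 1 ≤ a) (has : a ≤ s + 2) :
      HasLinearGap ((s + 4) ^ 3) (partitionSeries {k} * partitionSeries {a, a + 1})
        (X ^ s * (partitionSeries {s} * partitionSeries {a, a + 1})) := by
    rw [partitionSeries_insert (Set.mem_singleton_iff.not.2 a.lt_succ_self.ne)]
    refine (hasLinearGap_singleton_mul hs hk (by nlinarith) (hasLinearCoeff_singleton_mul_singleton
      (by omega) a.succ_pos (by simp))).mono ?_
    calc a * (a + 1) * (s + 4) ≤ (s + 4) * (s + 4) * (s + 4) :=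
          Nat.mul_le_mul_right _ (Nat.mul_le_mul (by omega) (by omega))
      _ = (s + 4) ^ 3 := by ring
  rcases (show k = s + 1 ∨ k = s + 2 ∨ s + 3 ≤ k by omega) with rfl | rfl | hk3
  · refine ⟨{s + 2, s + 3}, ?_, hasLinearGap_pair (by simp) le_rfl⟩
    grind
  · -- `s + 1` and `s + 3` need not be coprime, so only one part is put into `A`.
    refine ⟨{s + 1}, ?_, (hasLinearGap_singleton_mul_singleton hs hk (Nat.succ_lt_succ hs)
      (by simp) (show (s + 1).Coprime (s + 1 + 1) by simp).symm).mono (by nlinarith)⟩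
    grind
  · refine ⟨{s + 1, s + 2}, ?_, hasLinearGap_pair le_rfl (by simp)⟩
    grind

theorem natCard_inD_le (L s k N : ℕ) :
    Nat.card {p : N.Partition // InD L s p} ≤
      coeff N (partitionSeries (insert k (Set.Icc (s + 1) (L + s) \ {k}))) := by
  classical
  rw [Nat.card_eq_fintype_card, Fintype.card_subtype, coeff_partitionSeries]
  exact card_le_card <| monotone_filter_right _ fun p _ hp x hx ↦ by
    rw [Set.insert_sdiff_singleton]
    exact .inr (hp.2 x hx)

theorem natCard_inI_eq {s k : ℕ} (hs : 0 < s) (hk : s < k) (L N : ℕ) :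
    Nat.card {p : N.Partition // InI L s k p} =
      coeff N (X ^ s * partitionSeries (insert s (Set.Icc (s + 1) (L + s) \ {k}))) := by
  classical
  rw [Nat.card_eq_fintype_card, Fintype.card_subtype, ← mul_one s,
    ← card_partitions_le_count hs (by simp), mul_one]
  refine congrArg card (filter_congr fun p _ ↦ ?_)
  simp only [InI, Multiset.one_le_count_iff_mem, Set.mem_insert_iff, Set.mem_sdiff, Set.mem_Icc,
    Set.mem_singleton_iff]
  constructor
  · rintro ⟨hsp, hle, hkp⟩
    refine ⟨fun x hx ↦ ?_, hsp⟩
    have hxk : x ≠ k := fun h ↦ hkp (h ▸ hx)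
    have := hle x hx
    omega
  · rintro ⟨hp, hsp⟩
    refine ⟨hsp, fun x hx ↦ ?_, fun hkp ↦ ?_⟩
    · have := hp x hx
      omega
    · have := hp k hkp
      omega

theorem pow_le_gammaS {s : ℕ} (hs : 0 < s) : (s + 4) ^ 39 ≤ GammaS s := by
  set P := prodP (3 * s + 2) s with hP
  have hPs : s + 6 ≤ P ∧ 10 ≤ P := by
    rw [hP, prodP, prod_range_succ, prod_range_succ']
    have hprod : 1 ≤ ∏ i ∈ range (3 * s), (s + 1 + (i + 1)) := one_le_prod' fun i _ ↦ by omega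
    have : 2 ≤ (∏ i ∈ range (3 * s), (s + 1 + (i + 1))) * (s + 1 + 0) := by nlinarith
    have := Nat.mul_le_mul_right (s + 1 + (3 * s + 1)) this
    omega
  have hsum : 0 < ∑ i ∈ range (3 * s + 2), (s + 1 + i) := by
    rw [sum_range_succ]
    omega
  have hexp : 39 ≤ (P ^ 2 - 1) * (3 * s + 2) + 2 := by
    have : 39 ≤ P ^ 2 - 1 := Nat.le_sub_one_of_lt (by nlinarith)
    nlinarith
  calc (s + 4) ^ 39 ≤ P ^ 39 := by gcongr; omega
    _ ≤ P ^ ((P ^ 2 - 1) * (3 * s + 2) + 2) := by gcongr; omega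
    _ ≤ _ := Nat.le_add_right _ _
    _ ≤ GammaS s := Nat.le_mul_of_pos_left _ hsum

theorem stmt_0_general (L s k : ℕ) (hs : 0 < s) (hL : 3 ≤ L) (hk : s + 1 ≤ k)
    (N : ℕ) (hN : (s + 4) ^ 39 ≤ N) :
    Nat.card {p : N.Partition // InI L s k p} > Nat.card {p : N.Partition // InD L s p} := by
  obtain ⟨A₀, hA₀, hgap⟩ := exists_subset_hasLinearGap hs hL hk
  set A := Set.Icc (s + 1) (L + s) \ {k} with hA
  have partitionSeries_insert_A {d : ℕ} (hd : d ∉ A) : partitionSeries (insert d A) =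
      partitionSeries {d} * partitionSeries A₀ * partitionSeries (A \ A₀) := by
    rw [partitionSeries_insert hd, mul_assoc, ← partitionSeries_union Set.disjoint_sdiff_right,
      Set.union_sdiff_cancel hA₀]
  have threshold_le : 65 * ((s + 4) ^ 3) ^ 12 ≤ (s + 4) ^ 39 := by
    have : 65 ≤ (s + 4) ^ 3 := (by norm_num : 65 ≤ 5 ^ 3).trans (by gcongr; omega)
    calc 65 * ((s + 4) ^ 3) ^ 12 ≤ (s + 4) ^ 3 * ((s + 4) ^ 3) ^ 12 := by gcongr
      _ = (s + 4) ^ 39 := by ring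
  calc Nat.card {p : N.Partition // InD L s p}
      ≤ coeff N (partitionSeries (insert k A)) := natCard_inD_le L s k N
    _ = coeff N (partitionSeries {k} * partitionSeries A₀ * partitionSeries (A \ A₀)) := by
        rw [partitionSeries_insert_A (by simp [hA])]
    _ < coeff N (X ^ s * (partitionSeries {s} * partitionSeries A₀) * partitionSeries (A \ A₀)) :=
        hgap.coeff_mul_partitionSeries_lt _ (threshold_le.trans hN)
    _ = coeff N (X ^ s * partitionSeries (insert s A)) := by
        rw [partitionSeries_insert_A (by simp [hA]), mul_assoc]
    _ = Nat.card {p : N.Partition // InI L s k p} := (natCard_inI_eq hs hk L N).symm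

theorem stmt_0 (L s k : ℕ) (hs : 0 < s) (hL : 3 ≤ L) (hk1 : s + 1 ≤ k) (hk2 : k ≤ L + s)
    (N : ℕ) (hN : GammaS s ≤ N) :
    Nat.card {p : N.Partition // InI L s k p} > Nat.card {p : N.Partition // InD L s p} :=
  stmt_0_general L s k hs hL hk1 N ((pow_le_gammaS hs).trans hN)
end

section
/- Let s and L be positive integers with L ≥ s+3. Then for every integer N ≥ κ(s), the number of partitions of N lying in C_{L,s} is strictly greater than the number of partitions of N lying in D_{L,s}. -/
/-- `C_{L,s}`: partitions with smallest part `s`, all parts `≤ L+s`, and no part equal to `L+s-1`. -/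
def InC (L s : ℕ) {N : ℕ} (p : N.Partition) : Prop :=
  s ∈ p.parts ∧ (∀ x ∈ p.parts, s ≤ x ∧ x ≤ L + s) ∧ (L + s - 1) ∉ p.parts

/-- `F(s) = (10s−2)(15s−3)+8s`. -/
def Fs (s : ℕ) : ℕ := (10 * s - 2) * (15 * s - 3) + 8 * s

/-- `κ(s) = (12s−1)((s+1)+(s+2)+⋯+(F(s)−1))+1`. -/
def kappa (s : ℕ) : ℕ := (12 * s - 1) * (∑ i ∈ Finset.Icc (s + 1) (Fs s - 1), i) + 1

/-!
Every partition `p` in `D_{L,s}` is exchanged for one in `I_{L,s,k}` by trading some parts for copies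
of `s`, in such a way that the number of new copies of `s` modulo `4` tells which trade was made:

* if `k` occurs exactly `j ≥ 1` times, trade all its copies for `2 * j - 1` copies of `s`;
* otherwise, if some `i` occurs at least `4 * s` times, trade `4 * s` copies of it for `4 * i` copies
  of `s`;
* otherwise, since `N` is large, there is a large part `x = s * (4 * r + 2) + (4 * s + 1) * u`; trade
  it for `4 * r + 2` copies of `s` and a partition of `u` repeated `4 * s + 1` times. The remaining
  parts have multiplicity less than `4 * s`, so division by `4 * s + 1` recovers `u` from the
  multiplicities.

In the first and third trade what remains is split canonically into parts in `[s + 1, 2 * s + 1]`.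
The count of `s` determines `j`, `i` or `r`, so the exchange is injective, and it never produces
exactly four copies of `s`, because `4 * i > 4`.
-/

open Multiset (replicate)

section Multiset

variable {α : Type*}

theorem replicate_add_inj_of_notMem {a : α} {m n : ℕ} {ρ τ : Multiset α} (hρ : a ∉ ρ)
    (hτ : a ∉ τ) (h : replicate m a + ρ = replicate n a + τ) : m = n ∧ ρ = τ := by
  classical
  have hmn : m = n := by
    simpa [Multiset.count_eq_zero_of_notMem, hρ, hτ] using congrArg (Multiset.count a) h
  subst hmn
  exact ⟨rfl, add_left_cancel h⟩

theorem nsmul_add_inj_of_count_lt [DecidableEq α] {d : ℕ} {μ ν ρ τ : Multiset α}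
    (hρ : ∀ a, ρ.count a < d) (hτ : ∀ a, τ.count a < d) (h : d • μ + ρ = d • ν + τ) :
    μ = ν ∧ ρ = τ := by
  have hμν : μ = ν := by
    ext a
    have hcount : d * μ.count a + ρ.count a = d * ν.count a + τ.count a := by
      simpa using congrArg (Multiset.count a) h
    have hd : 0 < d := (Nat.zero_le _).trans_lt (hρ a)
    simpa [Nat.mul_add_div hd, Nat.div_eq_of_lt, hρ a, hτ a] using congrArg (· / d) hcount
  subst hμν
  exact ⟨rfl, add_left_cancel h⟩

theorem exists_mem_ge_of_mul_sum_Ico_lt_sum {a b c : ℕ} {μ : Multiset ℕ} (ha : ∀ x ∈ μ, a ≤ x)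
    (hc : ∀ x, μ.count x ≤ c) (hsum : c * ∑ i ∈ Finset.Ico a b, i < μ.sum) : ∃ x ∈ μ, b ≤ x := by
  by_contra! hb
  refine hsum.not_ge ?_
  calc μ.sum = ∑ x ∈ μ.toFinset, μ.count x * x := Finset.sum_multiset_count μ
    _ ≤ ∑ x ∈ μ.toFinset, c * x := Finset.sum_le_sum fun x _ ↦ Nat.mul_le_mul_right x (hc x)
    _ ≤ ∑ x ∈ Finset.Ico a b, c * x := Finset.sum_le_sum_of_subset fun x hx ↦ by
        rw [Multiset.mem_toFinset] at hx
        exact Finset.mem_Ico.2 ⟨ha x hx, hb x hx⟩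
    _ = c * ∑ i ∈ Finset.Ico a b, i := (Finset.mul_sum ..).symm

end Multiset

theorem card_lt_card_of_leftUnique {α β : Type*} [Finite β] {R : α → β → Prop}
    (htotal : ∀ a, ∃ b, R a b) (hR : Relator.LeftUnique R) {b₀ : β} (hb₀ : ∀ a, ¬ R a b₀) :
    Nat.card α < Nat.card β := by
  choose f hf using htotal
  have hinj : Function.Injective f := fun a a' h ↦ hR (hf a) (h ▸ hf a')
  have : Finite α := Finite.of_injective f hinj
  have := Fintype.ofFinite α
  have := Fintype.ofFinite β
  rw [Nat.card_eq_fintype_card, Nat.card_eq_fintype_card]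
  refine Fintype.card_lt_of_injective_of_notMem f hinj (b := b₀) ?_
  rintro ⟨a, rfl⟩
  exact hb₀ a (hf a)

/-- The canonical partition of `u` into parts in `[s + 1, 2 * s + 1]`: all parts except possibly one
are `s + 1`. It has sum `u` only when `s < u`. -/
def nearConstParts (s u : ℕ) : Multiset ℕ :=
  replicate (u / (s + 1) - 1) (s + 1) + {s + 1 + u % (s + 1)}

theorem mem_Icc_of_mem_nearConstParts {s u x : ℕ} (hx : x ∈ nearConstParts s u) :
    x ∈ Set.Icc (s + 1) (2 * s + 1) := by
  have hmod : u % (s + 1) < s + 1 := Nat.mod_lt u s.succ_pos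
  rcases Multiset.mem_add.1 hx with hx | hx
  · rw [Multiset.eq_of_mem_replicate hx]
    constructor <;> omega
  · rw [Multiset.mem_singleton.1 hx]
    constructor <;> omega

theorem self_notMem_nearConstParts (s u : ℕ) : s ∉ nearConstParts s u := fun h ↦
  (Nat.lt_irrefl s) (mem_Icc_of_mem_nearConstParts h).1

theorem sum_nearConstParts {s u : ℕ} (hu : s < u) : (nearConstParts s u).sum = u := by
  have hq : 1 ≤ u / (s + 1) := (Nat.one_le_div_iff s.succ_pos).2 hu
  calc (nearConstParts s u).sum = (u / (s + 1) - 1 + 1) * (s + 1) + u % (s + 1) := by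
        simp only [nearConstParts, Multiset.sum_add, Multiset.sum_replicate,
          Multiset.sum_singleton, smul_eq_mul]
        ring
    _ = u := by rw [Nat.sub_add_cancel hq, Nat.div_add_mod']

/-- `Exchange s k π σ` says that `σ` arises from the multiset of parts `π` by one of the three
trades of parts for copies of `s`. In each of them `ρ` is the multiset of parts left alone. -/
inductive Exchange (s k : ℕ) : Multiset ℕ → Multiset ℕ → Prop
  | forbidden (j : ℕ) {ρ : Multiset ℕ} (hs : s ∉ ρ) (hk : k ∉ ρ) :
      Exchange s k (replicate (j + 1) k + ρ)
        (replicate (2 * j + 1) s + (nearConstParts s ((k - 2 * s) * (j + 1) + s) + ρ))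
  | repeated {i : ℕ} {ρ : Multiset ℕ} (hi : s < i) (hs : s ∉ ρ) (hk : k ∉ ρ) :
      Exchange s k (replicate (4 * s) i + ρ) (replicate (4 * i) s + ρ)
  | large (r : ℕ) {u : ℕ} {ρ : Multiset ℕ} (hu : s < u) (hs : s ∉ ρ) (hk : k ∉ ρ)
      (hρ : ∀ i, ρ.count i < 4 * s) :
      Exchange s k ((s * (4 * r + 2) + (4 * s + 1) * u) ::ₘ ρ)
        (replicate (4 * r + 2) s + ((4 * s + 1) • nearConstParts s u + ρ))

namespace Exchange

variable {s k : ℕ} {π π' σ σ' : Multiset ℕ}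

theorem eq_of_eq (h : Exchange s k π σ) (h' : Exchange s k π' σ') (hσ : σ = σ') : π = π' := by
  have notMem_nsmul (n u : ℕ) : s ∉ n • nearConstParts s u := fun h ↦
    self_notMem_nearConstParts s u (Multiset.mem_of_mem_nsmul h)
  rcases h with ⟨j, hs, -⟩ | ⟨-, hs, -⟩ | ⟨r, hu, hs, -, hρ⟩ <;>
  rcases h' with ⟨j', hs', -⟩ | ⟨-, hs', -⟩ | ⟨r', hu', hs', -, hρ'⟩ <;>
  obtain ⟨hcount, hrest⟩ := replicate_add_inj_of_notMem
    (by simp only [Multiset.mem_add, self_notMem_nearConstParts, notMem_nsmul, hs, or_self,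
      not_false_eq_true])
    (by simp only [Multiset.mem_add, self_notMem_nearConstParts, notMem_nsmul, hs', or_self,
      not_false_eq_true]) hσ
  case forbidden.forbidden =>
    obtain rfl : j = j' := by omega
    rw [add_left_cancel hrest]
  case repeated.repeated =>
    rw [mul_left_cancel₀ four_ne_zero hcount, hrest]
  case large.large =>
    obtain rfl : r = r' := by omega
    obtain ⟨hparts, rfl⟩ := nsmul_add_inj_of_count_lt (fun i ↦ (hρ i).trans (by omega))
      (fun i ↦ (hρ' i).trans (by omega)) hrest
    rw [← sum_nearConstParts hu, hparts, sum_nearConstParts hu']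
  all_goals omega

theorem leftUnique (s k : ℕ) : Relator.LeftUnique (Exchange s k) :=
  fun _ _ _ h h' ↦ h.eq_of_eq h' rfl

theorem count_self_ne_four (hs : 0 < s) (h : Exchange s k π σ) : σ.count s ≠ 4 := by
  rcases h with ⟨j, hsρ, -⟩ | ⟨hi, hsρ, -⟩ | ⟨r, -, hsρ, -, -⟩ <;>
  simp only [Multiset.count_add, Multiset.count_replicate_self, Multiset.count_nsmul,
    Multiset.count_eq_zero_of_notMem hsρ,
    Multiset.count_eq_zero_of_notMem (self_notMem_nearConstParts s _)] <;>
  omega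

theorem self_mem (h : Exchange s k π σ) : s ∈ σ := by
  rcases h with _ | ⟨hi, -, -⟩ | _ <;>
  exact Multiset.mem_add.2 (.inl (Multiset.mem_replicate.2 ⟨by omega, rfl⟩))

theorem mem_right (h : Exchange s k π σ) {x : ℕ} (hx : x ∈ σ) :
    x = s ∨ x ∈ Set.Icc (s + 1) (2 * s + 1) ∨ x ∈ π ∧ x ≠ k := by
  rcases h with ⟨j, -, hk⟩ | ⟨-, -, hk⟩ | ⟨r, -, -, hk, -⟩ <;>
  simp only [Multiset.mem_add] at hx
  case forbidden =>
    rcases hx with hx | hx | hx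
    · exact .inl (Multiset.eq_of_mem_replicate hx)
    · exact .inr (.inl (mem_Icc_of_mem_nearConstParts hx))
    · exact .inr (.inr ⟨Multiset.mem_add.2 (.inr hx), ne_of_mem_of_not_mem hx hk⟩)
  case repeated =>
    rcases hx with hx | hx
    · exact .inl (Multiset.eq_of_mem_replicate hx)
    · exact .inr (.inr ⟨Multiset.mem_add.2 (.inr hx), ne_of_mem_of_not_mem hx hk⟩)
  case large =>
    rcases hx with hx | hx | hx
    · exact .inl (Multiset.eq_of_mem_replicate hx)
    · exact .inr (.inl (mem_Icc_of_mem_nearConstParts (Multiset.mem_of_mem_nsmul hx)))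
    · exact .inr (.inr ⟨Multiset.mem_cons_of_mem hx, ne_of_mem_of_not_mem hx hk⟩)

theorem sum_eq (hk : 2 * s < k) (h : Exchange s k π σ) : σ.sum = π.sum := by
  rcases h with ⟨j, -, -⟩ | _ | ⟨r, hu, -, -, -⟩ <;>
  simp only [Multiset.sum_add, Multiset.sum_cons, Multiset.sum_replicate, Multiset.sum_nsmul,
    smul_eq_mul]
  case forbidden =>
    obtain ⟨c, rfl⟩ := Nat.exists_eq_add_of_lt hk
    have hremainder : s < (2 * s + c + 1 - 2 * s) * (j + 1) + s :=
      Nat.lt_add_of_pos_left (Nat.mul_pos (by omega) j.succ_pos)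
    rw [sum_nearConstParts hremainder, show 2 * s + c + 1 - 2 * s = c + 1 by omega]
    ring
  case repeated => ring
  case large =>
    rw [sum_nearConstParts hu]
    ring

end Exchange

/- Since `4 * s ≡ -1` modulo `4 * s + 1`, the residue of `x - 2 * s` is that of `4 * s * r` for some
`r ≤ 4 * s`, namely `-r`. -/
theorem exists_eq_mul_add_mul_of_le {s x : ℕ} (hx : (4 * s + 1) * (5 * s + 1) ≤ x) :
    ∃ r u, s < u ∧ x = s * (4 * r + 2) + (4 * s + 1) * u := by
  have hq : 5 * s + 1 ≤ (x + 2 * s) / (4 * s + 1) :=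
    (Nat.le_div_iff_mul_le (by omega)).2 (by linarith)
  have hdiv : (4 * s + 1) * ((x + 2 * s) / (4 * s + 1)) + (x + 2 * s) % (4 * s + 1) = x + 2 * s :=
    Nat.div_add_mod _ _
  have hmod : (x + 2 * s) % (4 * s + 1) < 4 * s + 1 := Nat.mod_lt _ (by omega)
  generalize (x + 2 * s) / (4 * s + 1) = q at hq hdiv
  generalize (x + 2 * s) % (4 * s + 1) = t at hdiv hmod
  obtain ⟨r, hr⟩ := Nat.exists_eq_add_of_le (Nat.lt_succ_iff.1 hmod)
  obtain ⟨u, rfl⟩ := Nat.exists_eq_add_of_le (show r ≤ q by omega)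
  exact ⟨r, u, by omega, by linarith⟩

theorem exists_exchange {s k : ℕ} (hs : 0 < s) {π : Multiset ℕ} (hπ : ∀ x ∈ π, s + 1 ≤ x)
    (hsum : (4 * s - 1) * ∑ i ∈ Finset.Ico (s + 1) ((4 * s + 1) * (5 * s + 1)), i < π.sum) :
    ∃ σ, Exchange s k π σ := by
  have hsπ : s ∉ π := fun h ↦ (hπ s h).not_gt s.lt_succ_self
  by_cases hkπ : k ∈ π
  · obtain ⟨j, hj⟩ := Nat.exists_eq_succ_of_ne_zero (Multiset.count_ne_zero.2 hkπ)
    have hsplit : replicate (j + 1) k + π.filter (¬ · = k) = π := by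
      rw [← Nat.succ_eq_add_one, ← hj, ← Multiset.filter_eq', Multiset.filter_add_not]
    rw [← hsplit]
    exact ⟨_, .forbidden j (fun h ↦ hsπ (Multiset.mem_of_mem_filter h))
      fun h ↦ (Multiset.mem_filter.1 h).2 rfl⟩
  by_cases hrep : ∃ i, 4 * s ≤ π.count i
  · obtain ⟨i, hi⟩ := hrep
    have hiπ : i ∈ π := Multiset.count_pos.1 (by omega)
    obtain ⟨ρ, rfl⟩ := Multiset.le_iff_exists_add.1 (Multiset.le_count_iff_replicate_le.1 hi)
    exact ⟨_, .repeated (hπ i hiπ) (fun h ↦ hsπ (Multiset.mem_add.2 (.inr h)))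
      fun h ↦ hkπ (Multiset.mem_add.2 (.inr h))⟩
  · push Not at hrep
    obtain ⟨x, hxπ, hx⟩ := exists_mem_ge_of_mul_sum_Ico_lt_sum hπ
      (fun i ↦ Nat.le_sub_one_of_lt (hrep i)) hsum
    obtain ⟨r, u, hu, rfl⟩ := exists_eq_mul_add_mul_of_le hx
    obtain ⟨ρ, rfl⟩ := Multiset.exists_cons_of_mem hxπ
    exact ⟨_, .large r hu (fun h ↦ hsπ (Multiset.mem_cons_of_mem h))
      (fun h ↦ hkπ (Multiset.mem_cons_of_mem h))
      fun i ↦ (Multiset.count_le_count_cons ..).trans_lt (hrep i)⟩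

section Partition

variable {L s k N : ℕ}

theorem InD.exists_exchange_inI (hs : 0 < s) (hL : s + 1 ≤ L) (hk : 2 * s + 2 ≤ k)
    (hN : (4 * s - 1) * ∑ i ∈ Finset.Ico (s + 1) ((4 * s + 1) * (5 * s + 1)), i < N)
    {p : N.Partition} (hp : InD L s p) :
    ∃ q : N.Partition, InI L s k q ∧ Exchange s k p.parts q.parts := by
  obtain ⟨σ, hσ⟩ := exists_exchange (k := k) hs (fun x hx ↦ (hp.2 x hx).1) (p.parts_sum.symm ▸ hN)
  have hbounds : ∀ x ∈ σ, (s ≤ x ∧ x ≤ L + s) ∧ x ≠ k := by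
    intro x hx
    rcases hσ.mem_right hx with rfl | ⟨hsx, hxs⟩ | ⟨hxp, hxk⟩
    · omega
    · omega
    · exact ⟨⟨(Nat.le_succ s).trans (hp.2 x hxp).1, (hp.2 x hxp).2⟩, hxk⟩
  exact ⟨⟨σ, fun hx ↦ hs.trans_le (hbounds _ hx).1.1, (hσ.sum_eq (by omega)).trans p.parts_sum⟩,
    ⟨hσ.self_mem, fun x hx ↦ (hbounds x hx).1, fun hkσ ↦ (hbounds k hkσ).2 rfl⟩, hσ⟩

theorem exists_inI_count_eq_four (hs : 0 < s) (hL : s + 1 ≤ L) (hk : 2 * s + 2 ≤ k)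
    (hN : 5 * s < N) : ∃ q : N.Partition, InI L s k q ∧ q.parts.count s = 4 := by
  have hbounds : ∀ x ∈ replicate 4 s + nearConstParts s (N - 4 * s), s ≤ x ∧ x ≤ 2 * s + 1 := by
    intro x hx
    rcases Multiset.mem_add.1 hx with hx | hx
    · rw [Multiset.eq_of_mem_replicate hx]
      omega
    · exact ⟨(Nat.le_succ s).trans (mem_Icc_of_mem_nearConstParts hx).1,
        (mem_Icc_of_mem_nearConstParts hx).2⟩
  have hsum : (replicate 4 s + nearConstParts s (N - 4 * s)).sum = N := by
    rw [Multiset.sum_add, Multiset.sum_replicate, sum_nearConstParts (by omega), smul_eq_mul]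
    omega
  refine ⟨⟨_, fun hx ↦ hs.trans_le (hbounds _ hx).1, hsum⟩, ⟨?_, ?_, ?_⟩, ?_⟩
  · exact Multiset.mem_add.2 (.inl (Multiset.mem_replicate.2 ⟨four_ne_zero, rfl⟩))
  · exact fun x hx ↦ ⟨(hbounds x hx).1, (hbounds x hx).2.trans (by omega)⟩
  · exact fun hkq ↦ (hbounds k hkq).2.not_gt (by omega)
  · rw [Multiset.count_add, Multiset.count_replicate_self,
      Multiset.count_eq_zero_of_notMem (self_notMem_nearConstParts s _)]

end Partition

theorem five_mul_le_mul_sum_Ico {s : ℕ} (hs : 0 < s) :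
    5 * s ≤ (4 * s - 1) * ∑ i ∈ Finset.Ico (s + 1) ((4 * s + 1) * (5 * s + 1)), i := by
  have hmem : 5 * s ∈ Finset.Ico (s + 1) ((4 * s + 1) * (5 * s + 1)) :=
    Finset.mem_Ico.2 ⟨by omega, by nlinarith⟩
  calc 5 * s ≤ ∑ i ∈ Finset.Ico (s + 1) ((4 * s + 1) * (5 * s + 1)), i :=
        Finset.single_le_sum (f := id) (fun _ _ ↦ Nat.zero_le _) hmem
    _ ≤ _ := Nat.le_mul_of_pos_left _ (by omega)

theorem mul_sum_Ico_lt_kappa {s : ℕ} (hs : 0 < s) :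
    (4 * s - 1) * ∑ i ∈ Finset.Ico (s + 1) ((4 * s + 1) * (5 * s + 1)), i < kappa s := by
  have hFs : (4 * s + 1) * (5 * s + 1) ≤ Fs s := by
    obtain ⟨n, rfl⟩ := Nat.exists_eq_succ_of_ne_zero hs.ne'
    rw [Fs, show 10 * n.succ - 2 = 10 * n + 8 by omega,
      show 15 * n.succ - 3 = 15 * n + 12 by omega, Nat.succ_eq_add_one]
    nlinarith
  have hsub : Finset.Ico (s + 1) ((4 * s + 1) * (5 * s + 1)) ⊆ Finset.Icc (s + 1) (Fs s - 1) := by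
    intro i hi
    rw [Finset.mem_Ico] at hi
    exact Finset.mem_Icc.2 ⟨hi.1, Nat.le_sub_one_of_lt (hi.2.trans_le hFs)⟩
  exact Nat.lt_succ_of_le (Nat.mul_le_mul (by omega) (Finset.sum_le_sum_of_subset hsub))

theorem stmt_3_general (L s k : ℕ) (hs : 0 < s) (hL : s + 1 ≤ L) (hk : 2 * s + 2 ≤ k) (N : ℕ)
    (hN : (4 * s - 1) * ∑ i ∈ Finset.Ico (s + 1) ((4 * s + 1) * (5 * s + 1)), i < N) :
    Nat.card {p : N.Partition // InI L s k p} > Nat.card {p : N.Partition // InD L s p} := by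
  obtain ⟨q₀, hq₀, hcount⟩ :=
    exists_inI_count_eq_four hs hL hk ((five_mul_le_mul_sum_Ico hs).trans_lt hN)
  refine card_lt_card_of_leftUnique (R := fun p q ↦ Exchange s k p.1.parts q.1.parts)
    (b₀ := ⟨q₀, hq₀⟩) ?total ?leftUnique ?missed
  case total =>
    rintro ⟨p, hp⟩
    obtain ⟨q, hq, hpq⟩ := hp.exists_exchange_inI hs hL hk hN
    exact ⟨⟨q, hq⟩, hpq⟩
  case leftUnique =>
    exact fun p q p' h h' ↦ Subtype.ext (Nat.Partition.ext (Exchange.leftUnique s k h h'))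
  case missed => exact fun p h ↦ h.count_self_ne_four hs hcount

theorem stmt_3 (L s : ℕ) (hs : 0 < s) (hL : s + 3 ≤ L)
    (N : ℕ) (hN : kappa s ≤ N) :
    Nat.card {p : N.Partition // InC L s p} > Nat.card {p : N.Partition // InD L s p} :=
  stmt_3_general L s (L + s - 1) hs (by omega) (by omega) N ((mul_sum_Ico_lt_kappa hs).trans_le hN)
end

section
/- Let L, s and k be positive integers with L ≥ 3 and s+1 ≤ k ≤ L+s. Then for every integer N ≥ γ(L,s), the number of partitions of N lying in I_{L,s,k} is strictly greater than the number of partitions of N lying in D_{L,s}. -/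
/-!
Partitions of `N` with parts in a finite set `S` correspond to vectors `f` indexed by `S` with
`i ∣ f i` and `∑ i, f i = N`. Fix a common multiple `M` of the elements of `S` and write
`f i = ρ i + M * y i` with `0 ≤ ρ i < M`. The residue vectors `ρ` form the fibre over `N` of the sum
homomorphism from the product of the subgroups generated by `i` in `ZMod M` to `ZMod M`. When `S`
has gcd `1` this homomorphism is onto, so there are exactly `M ^ (#S - 1) / ∏ i ∈ S, i` residue
vectors, whatever `N` is. Each of them leaves `y` free among the vectors whose sum is
`(N - ∑ i, ρ i) / M`, which lies between `N / M - #S` and `N / M`.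

Removing one part `s` from a partition in `I_{L,s,k}` leaves an arbitrary partition with parts in
`{s, ..., L + s} \ {k}`. Compared with the part set `{s + 1, ..., L + s}`, the number of residue
vectors is multiplied by `k / s > 1`, and for large `N` this outweighs the bounded shift in the
sums allowed for `y`.
-/

open Finset

theorem card_piAntidiag_univ {ι : Type*} [Fintype ι] [DecidableEq ι] (n : ℕ) :
    #(piAntidiag (univ : Finset ι) n) = (Fintype.card ι).multichoose n := by
  rw [← card_univ, ← card_finsuppAntidiag_nat_eq_multichoose, finsuppAntidiag, card_map,
    card_attach]

theorem succ_mul_multichoose_succ (L m : ℕ) :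
    (m + 1) * L.multichoose (m + 1) = (L + m) * L.multichoose m := by
  cases L with
  | zero => cases m <;> simp
  | succ l =>
    have h := Nat.add_one_mul_choose_eq (l + m) m
    simp only [Nat.multichoose_eq, add_right_comm l 1, Nat.add_sub_cancel, ← add_assoc]
    linarith

theorem monotone_multichoose {L : ℕ} (hL : 0 < L) : Monotone L.multichoose := by
  obtain ⟨l, rfl⟩ := Nat.exists_eq_succ_of_ne_zero hL.ne'
  refine monotone_nat_of_le_succ fun m => ?_
  rw [Nat.multichoose_succ_succ]
  exact Nat.le_add_left _ _

theorem multichoose_pos {L : ℕ} (hL : 0 < L) (m : ℕ) : 0 < L.multichoose m := by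
  simpa [Nat.one_le_iff_ne_zero, Nat.pos_iff_ne_zero] using monotone_multichoose hL (Nat.zero_le m)

theorem mul_multichoose_succ_le {n m : ℕ} (L : ℕ) (hnm : n ≤ m) :
    n * L.multichoose (m + 1) ≤ (n + L) * L.multichoose m := by
  have hstep := succ_mul_multichoose_succ L m
  have h : n * ((m + 1) * L.multichoose (m + 1)) ≤ (m + 1) * ((n + L) * L.multichoose m) := by
    rw [hstep]
    have : n * (L + m) ≤ (m + 1) * (n + L) := by nlinarith
    nlinarith [Nat.mul_le_mul_right (L.multichoose m) this]
  exact Nat.le_of_mul_le_mul_left (by linarith) m.succ_pos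

theorem mul_multichoose_add_le {L : ℕ} (hL : 0 < L) (n c : ℕ) :
    n * L.multichoose (n + c) ≤ n * L.multichoose n + c * L * L.multichoose (n + c) := by
  induction c with
  | zero => simp
  | succ c ih =>
    have hmono : L.multichoose (n + c) ≤ L.multichoose (n + (c + 1)) :=
      monotone_multichoose hL (by lia)
    calc n * L.multichoose (n + (c + 1))
        ≤ n * L.multichoose (n + c) + L * L.multichoose (n + c) := by
          rw [← add_mul]; exact mul_multichoose_succ_le L (Nat.le_add_right n c)
      _ ≤ n * L.multichoose n + c * L * L.multichoose (n + c) + L * L.multichoose (n + c) := by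
          gcongr
      _ = n * L.multichoose n + (c + 1) * L * L.multichoose (n + c) := by ring
      _ ≤ n * L.multichoose n + (c + 1) * L * L.multichoose (n + (c + 1)) := by gcongr

theorem mul_multichoose_add_lt {L n c q r : ℕ} (hL : 0 < L) (hqr : q < r)
    (hn : r * (c * L) < n) :
    q * L.multichoose (n + c) < r * L.multichoose n := by
  have hpos := multichoose_pos hL (n + c)
  refine Nat.lt_of_mul_lt_mul_left (a := n) ?_
  refine Nat.lt_of_add_lt_add_right (n := n * L.multichoose (n + c)) ?_
  calc n * (q * L.multichoose (n + c)) + n * L.multichoose (n + c)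
      = (q + 1) * (n * L.multichoose (n + c)) := by ring
    _ ≤ r * (n * L.multichoose n + c * L * L.multichoose (n + c)) := by
        gcongr
        · exact hqr
        · exact mul_multichoose_add_le hL n c
    _ = n * (r * L.multichoose n) + r * (c * L) * L.multichoose (n + c) := by ring
    _ < n * (r * L.multichoose n) + n * L.multichoose (n + c) := by gcongr

theorem card_mul_card_fiber_of_surjective {G A : Type*} [AddGroup G] [Fintype G] [AddGroup A]
    [Fintype A] [DecidableEq A] {φ : G →+ A} (hφ : Function.Surjective φ) (c : A) :
    Fintype.card A * #{g | φ g = c} = Fintype.card G := by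
  rw [← card_univ (α := G),
    card_eq_sum_card_fiberwise (s := (univ : Finset G)) (f := φ) (t := univ) (by simp),
    sum_congr rfl fun x _ => AddMonoidHom.card_fiber_eq_of_mem_range φ (hφ x) (hφ c)]
  simp

theorem card_zmultiples_natCast_mul {a M : ℕ} [NeZero M] (ha : a ∣ M) :
    Nat.card (AddSubgroup.zmultiples (a : ZMod M)) * a = M := by
  rw [Nat.card_zmultiples, ZMod.addOrderOf_coe a (NeZero.ne M), Nat.gcd_eq_right ha,
    Nat.div_mul_cancel ha]

theorem natCast_mem_zmultiples_iff {a M n : ℕ} (ha : a ∣ M) :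
    (n : ZMod M) ∈ AddSubgroup.zmultiples (a : ZMod M) ↔ a ∣ n := by
  rw [AddSubgroup.mem_zmultiples_iff]
  constructor
  · rintro ⟨z, hz⟩
    have : ((z * a : ℤ) : ZMod M) = (n : ℤ) := by simpa using hz
    rw [ZMod.intCast_eq_intCast_iff_dvd_sub] at this
    have hsub : (a : ℤ) ∣ n - z * a := (Int.natCast_dvd_natCast.2 ha).trans this
    exact_mod_cast (dvd_sub_left (dvd_mul_left _ z)).1 hsub
  · rintro ⟨x, rfl⟩
    exact ⟨x, by simp [mul_comm]⟩

theorem nonempty_of_gcd_eq_one {ι : Type*} {S : Finset ι} {a : ι → ℕ} (hgcd : S.gcd a = 1) :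
    S.Nonempty :=
  nonempty_iff_ne_empty.2 fun h => by simp [h] at hgcd

section WeightedAntidiag

variable {ι : Type*} [Fintype ι] (a : ι → ℕ)

open Classical in
/-- The vectors modulo `M` with sum `c` whose `i`-th coordinate is a multiple of `a i`. -/
noncomputable def zmodWeightedAntidiag (M : ℕ) [NeZero M] (c : ZMod M) : Finset (ι → ZMod M) :=
  {ρ | ∑ i, ρ i = c ∧ ∀ i, ρ i ∈ AddSubgroup.zmultiples (a i : ZMod M)}

theorem mem_zmodWeightedAntidiag {a : ι → ℕ} {M : ℕ} [NeZero M] {c : ZMod M} {ρ : ι → ZMod M} :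
    ρ ∈ zmodWeightedAntidiag a M c ↔
      ∑ i, ρ i = c ∧ ∀ i, ρ i ∈ AddSubgroup.zmultiples (a i : ZMod M) := by
  simp [zmodWeightedAntidiag]

/-- Addition of the coordinates, as a homomorphism on the multiples of the weights modulo `M`. -/
def zmultiplesSum (M : ℕ) :
    (∀ i, AddSubgroup.zmultiples (a i : ZMod M)) →+ ZMod M where
  toFun g := ∑ i, (g i : ZMod M)
  map_zero' := by simp
  map_add' := by simp [sum_add_distrib]

variable {a}

theorem exists_sum_mul_eq_one (hgcd : univ.gcd a = 1) : ∃ z : ι → ℤ, ∑ i, a i * z i = 1 := by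
  obtain ⟨z, hz⟩ := gcd_eq_sum_mul univ fun i => (a i : ℤ)
  suffices (univ.gcd fun i => (a i : ℤ)) = 1 from ⟨z, hz ▸ this⟩
  have hdvd : (univ.gcd fun i => (a i : ℤ)).natAbs ∣ univ.gcd a :=
    dvd_gcd fun i hi => Int.natCast_dvd_natCast.1 (Int.natAbs_dvd.2 (gcd_dvd hi))
  rw [hgcd, Nat.dvd_one] at hdvd
  rw [← Int.natAbs_of_nonneg Int.finsetGcd_nonneg, hdvd, Nat.cast_one]

theorem zmultiplesSum_surjective (hgcd : univ.gcd a = 1) (M : ℕ) :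
    Function.Surjective (zmultiplesSum a M) := by
  obtain ⟨z, hz⟩ := exists_sum_mul_eq_one hgcd
  intro c
  obtain ⟨n, rfl⟩ := ZMod.intCast_surjective c
  refine ⟨fun i => ⟨(n * z i) • (a i : ZMod M), AddSubgroup.zsmul_mem_zmultiples _ _⟩, ?_⟩
  have := congrArg (fun k : ℤ => ((n * k : ℤ) : ZMod M)) hz
  simpa [zmultiplesSum, mul_sum, mul_assoc, mul_comm] using this

variable {M : ℕ} [NeZero M]

theorem card_zmultiples_pi_mul_prod (ha : ∀ i, a i ∣ M) :
    Nat.card (∀ i, AddSubgroup.zmultiples (a i : ZMod M)) * ∏ i, a i = M ^ Fintype.card ι := by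
  rw [Nat.card_pi, ← prod_mul_distrib, prod_congr rfl fun i _ => card_zmultiples_natCast_mul (ha i)]
  simp

open Classical in
theorem card_zmodWeightedAntidiag_eq_card_fiber (c : ZMod M) :
    #(zmodWeightedAntidiag a M c) = #{g | zmultiplesSum a M g = c} := by
  refine (card_bij (fun g _ i => (g i : ZMod M)) ?_ ?_ ?_).symm
  · intro g hg
    exact mem_zmodWeightedAntidiag.2 ⟨(mem_filter.1 hg).2, fun i => (g i).2⟩
  · intro g _ h _ hgh
    exact funext fun i => Subtype.ext (congrFun hgh i)
  · intro ρ hρ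
    obtain ⟨hsum, hmem⟩ := mem_zmodWeightedAntidiag.1 hρ
    exact ⟨fun i => ⟨ρ i, hmem i⟩, mem_filter.2 ⟨mem_univ _, hsum⟩, rfl⟩

theorem card_zmodWeightedAntidiag (ha : ∀ i, a i ∣ M) (hgcd : univ.gcd a = 1) (c : ZMod M) :
    M * (∏ i, a i) * #(zmodWeightedAntidiag a M c) = M ^ Fintype.card ι := by
  classical
  have hfiber := card_mul_card_fiber_of_surjective (zmultiplesSum_surjective hgcd M) c
  rw [ZMod.card, ← card_zmodWeightedAntidiag_eq_card_fiber, ← Nat.card_eq_fintype_card] at hfiber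
  rw [mul_right_comm, hfiber, card_zmultiples_pi_mul_prod ha]

variable [DecidableEq ι]

variable (a) in
/-- The vectors `(a i * x i)ᵢ`, where `x` runs over the solutions of `∑ i, a i * x i = N`.
If all weights divide `M`, then recording the products rather than `x` lets every coordinate be
reduced modulo the same `M`. -/
def weightedAntidiag (N : ℕ) : Finset (ι → ℕ) :=
  {f ∈ piAntidiag univ N | ∀ i, a i ∣ f i}

theorem mem_weightedAntidiag {N : ℕ} {f : ι → ℕ} :
    f ∈ weightedAntidiag a N ↔ ∑ i, f i = N ∧ ∀ i, a i ∣ f i := by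
  simp [weightedAntidiag]

theorem natCast_comp_mem_zmodWeightedAntidiag {N : ℕ} {f : ι → ℕ} (hf : f ∈ weightedAntidiag a N) :
    (fun i => (f i : ZMod M)) ∈ zmodWeightedAntidiag a M N := by
  obtain ⟨rfl, hdvd⟩ := mem_weightedAntidiag.1 hf
  refine mem_zmodWeightedAntidiag.2 ⟨by simp, fun i => ?_⟩
  obtain ⟨x, hx⟩ := hdvd i
  exact ⟨x, by simp [hx, mul_comm]⟩

theorem card_weightedAntidiag_eq_sum_card_fiber (N : ℕ) :
    #(weightedAntidiag a N) = ∑ ρ ∈ zmodWeightedAntidiag a M N,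
      #{f ∈ weightedAntidiag a N | (fun i => (f i : ZMod M)) = ρ} :=
  card_eq_sum_card_fiberwise fun _ => natCast_comp_mem_zmodWeightedAntidiag

theorem card_weightedAntidiag_fiber_le {N : ℕ} (ρ : ι → ZMod M) :
    #{f ∈ weightedAntidiag a N | (fun i => (f i : ZMod M)) = ρ} ≤
      (Fintype.card ι).multichoose ((N - ∑ i, (ρ i).val) / M) := by
  rw [← card_piAntidiag_univ]
  refine card_le_card_of_injOn (fun f i => f i / M) ?_ ?_
  · intro f hf
    rw [mem_coe, mem_filter, mem_weightedAntidiag] at hf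
    obtain ⟨⟨rfl, -⟩, rfl⟩ := hf
    have hsum : ∑ i, f i = ∑ i, f i % M + M * ∑ i, f i / M := by
      rw [mul_sum, ← sum_add_distrib]
      exact sum_congr rfl fun i _ => (Nat.mod_add_div _ _).symm
    have hdiv : (∑ i, f i - ∑ i, f i % M) / M = ∑ i, f i / M := by
      rw [hsum, Nat.add_sub_cancel_left, Nat.mul_div_cancel_left _ (NeZero.pos M)]
    simp [ZMod.val_natCast, hdiv]
  · intro f hf g hg hfg
    rw [mem_coe, mem_filter] at hf hg
    funext i
    have hmod : f i % M = g i % M :=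
      (ZMod.natCast_eq_natCast_iff' _ _ _).1 (congrFun (hf.2.trans hg.2.symm) i)
    have hdiv : f i / M = g i / M := congrFun hfg i
    rw [← Nat.mod_add_div (f i) M, hmod, hdiv, Nat.mod_add_div]

theorem le_card_weightedAntidiag_fiber (ha : ∀ i, a i ∣ M) {N : ℕ} {ρ : ι → ZMod M}
    (hρ : ρ ∈ zmodWeightedAntidiag a M N) (hN : ∑ i, (ρ i).val ≤ N) :
    (Fintype.card ι).multichoose ((N - ∑ i, (ρ i).val) / M) ≤
      #{f ∈ weightedAntidiag a N | (fun i => (f i : ZMod M)) = ρ} := by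
  obtain ⟨hsum, hmem⟩ := mem_zmodWeightedAntidiag.1 hρ
  have hM : M ∣ N - ∑ i, (ρ i).val := by
    rw [← ZMod.natCast_eq_zero_iff, Nat.cast_sub hN, ← hsum]
    simp
  rw [← card_piAntidiag_univ]
  refine card_le_card_of_injOn (fun y i => (ρ i).val + M * y i) ?_ ?_
  · intro y hy
    simp only [mem_coe, mem_piAntidiag, mem_univ, implies_true, and_true] at hy
    simp only [mem_coe, mem_filter, mem_weightedAntidiag]
    refine ⟨⟨?_, fun i => ?_⟩, by simp⟩
    · rw [sum_add_distrib, ← mul_sum, hy, Nat.mul_div_cancel' hM, Nat.add_sub_cancel' hN]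
    · rw [← natCast_mem_zmultiples_iff (ha i)]
      simpa using hmem i
  · intro x _ y _ hxy
    funext i
    simpa [NeZero.ne M] using congrFun hxy i

theorem prod_mul_card_weightedAntidiag_le (ha : ∀ i, a i ∣ M)
    (hgcd : univ.gcd a = 1) (N : ℕ) :
    M * (∏ i, a i) * #(weightedAntidiag a N) ≤
      M ^ Fintype.card ι * (Fintype.card ι).multichoose (N / M) := by
  have hcard : 0 < Fintype.card ι := card_pos.2 (nonempty_of_gcd_eq_one hgcd)
  rw [← card_zmodWeightedAntidiag ha hgcd N, mul_assoc _ (#_)]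
  gcongr
  rw [card_weightedAntidiag_eq_sum_card_fiber (M := M), ← smul_eq_mul]
  refine sum_le_card_nsmul _ _ _ fun ρ _ => (card_weightedAntidiag_fiber_le ρ).trans ?_
  exact monotone_multichoose hcard (Nat.div_le_div_right (Nat.sub_le _ _))

theorem le_prod_mul_card_weightedAntidiag (ha : ∀ i, a i ∣ M)
    (hgcd : univ.gcd a = 1) {n N : ℕ} (hN : (n + Fintype.card ι) * M ≤ N) :
    M ^ Fintype.card ι * (Fintype.card ι).multichoose n ≤
      M * (∏ i, a i) * #(weightedAntidiag a N) := by
  have hcard : 0 < Fintype.card ι := card_pos.2 (nonempty_of_gcd_eq_one hgcd)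
  rw [← card_zmodWeightedAntidiag ha hgcd N, mul_assoc _ (#_)]
  gcongr
  rw [card_weightedAntidiag_eq_sum_card_fiber (M := M), ← smul_eq_mul]
  refine card_nsmul_le_sum _ _ _ fun ρ hρ => ?_
  have hsum : ∑ i, (ρ i).val ≤ Fintype.card ι * M :=
    (sum_le_card_nsmul univ _ M fun i _ => (ρ i).val_lt.le).trans (by simp)
  rw [add_mul] at hN
  refine le_trans (monotone_multichoose hcard ?_)
    (le_card_weightedAntidiag_fiber ha hρ (by lia))
  rw [Nat.le_div_iff_mul_le (NeZero.pos M)]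
  lia

end WeightedAntidiag

section Partition

theorem count_mul_mem_weightedAntidiag {S : Finset ℕ} {N : ℕ} {p : N.Partition}
    (hp : ∀ i ∈ p.parts, i ∈ S) :
    (fun i : S => p.parts.count (i : ℕ) * i) ∈ weightedAntidiag (fun i : S => (i : ℕ)) N := by
  refine mem_weightedAntidiag.2 ⟨?_, fun i => Nat.dvd_mul_left _ _⟩
  have hsum := sum_multiset_count_of_subset p.parts S fun i hi => hp i (Multiset.mem_toFinset.1 hi)
  rw [p.parts_sum] at hsum
  exact (sum_coe_sort S fun i => p.parts.count i * i).trans hsum.symm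

theorem exists_partition_count_eq {S : Finset ℕ} (hS : 0 ∉ S) {N : ℕ} {f : S → ℕ}
    (hf : f ∈ weightedAntidiag (fun i : S => (i : ℕ)) N) :
    ∃ p ∈ Nat.Partition.restricted N (· ∈ S), (fun i : S => p.parts.count (i : ℕ) * i) = f := by
  obtain ⟨hsum, hdvd⟩ := mem_weightedAntidiag.1 hf
  choose x hx using hdvd
  have hmem : ∀ i ∈ ∑ j : S, Multiset.replicate (x j) (j : ℕ), i ∈ S := by
    intro i hi
    obtain ⟨j, -, hj⟩ := Multiset.mem_sum.1 hi
    exact Multiset.eq_of_mem_replicate hj ▸ j.2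
  refine ⟨⟨∑ j : S, Multiset.replicate (x j) (j : ℕ), fun {i} hi => ?_, ?_⟩, ?_, ?_⟩
  · exact Nat.pos_of_ne_zero fun h => hS (h ▸ hmem i hi)
  · simp [Multiset.sum_sum, ← hsum, hx, mul_comm]
  · simpa [Nat.Partition.restricted] using hmem
  · funext i
    simp [Multiset.count_sum', Multiset.count_replicate, hx, mul_comm]

theorem card_restricted_mem {S : Finset ℕ} (hS : 0 ∉ S) (N : ℕ) :
    #(Nat.Partition.restricted N (· ∈ S)) = #(weightedAntidiag (fun i : S => (i : ℕ)) N) := by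
  refine card_bij (fun p _ i => p.parts.count (i : ℕ) * i) (fun p hp => ?_) ?_ ?_
  · exact count_mul_mem_weightedAntidiag (mem_filter.1 hp).2
  · intro p hp q hq hpq
    have hp := (mem_filter.1 hp).2
    have hq := (mem_filter.1 hq).2
    refine Nat.Partition.ext (Multiset.ext.2 fun i => ?_)
    by_cases hi : i ∈ S
    · have hi0 : 0 < i := Nat.pos_of_ne_zero fun h => hS (h ▸ hi)
      exact Nat.eq_of_mul_eq_mul_right hi0 (congrFun hpq ⟨i, hi⟩)
    · rw [Multiset.count_eq_zero_of_notMem (mt (hp i) hi),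
        Multiset.count_eq_zero_of_notMem (mt (hq i) hi)]
  · intro f hf
    obtain ⟨p, hp, rfl⟩ := exists_partition_count_eq hS hf
    exact ⟨p, hp, rfl⟩

theorem univ_gcd_coe (S : Finset ℕ) : (univ.gcd fun i : S => (i : ℕ)) = S.gcd id := by
  rw [gcd_eq_gcd_image, univ_eq_attach, attach_image_val]

variable {S : Finset ℕ} {M : ℕ} [NeZero M]

theorem prod_mul_card_restricted_le (hS : ∀ i ∈ S, i ∣ M) (hgcd : S.gcd id = 1) (N : ℕ) :
    M * (∏ i ∈ S, i) * #(Nat.Partition.restricted N (· ∈ S)) ≤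
      M ^ #S * (#S).multichoose (N / M) := by
  have h0 : 0 ∉ S := fun h => NeZero.ne M (Nat.eq_zero_of_zero_dvd (hS 0 h))
  have h := prod_mul_card_weightedAntidiag_le (fun i : S => hS i i.2)
    ((univ_gcd_coe S).trans hgcd) N
  rwa [prod_coe_sort S fun i => i, ← card_restricted_mem h0, Fintype.card_coe] at h

theorem le_prod_mul_card_restricted (hS : ∀ i ∈ S, i ∣ M) (hgcd : S.gcd id = 1) {n N : ℕ}
    (hN : (n + #S) * M ≤ N) :
    M ^ #S * (#S).multichoose n ≤
      M * (∏ i ∈ S, i) * #(Nat.Partition.restricted N (· ∈ S)) := by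
  have h0 : 0 ∉ S := fun h => NeZero.ne M (Nat.eq_zero_of_zero_dvd (hS 0 h))
  rw [← Fintype.card_coe] at hN
  have h := le_prod_mul_card_weightedAntidiag (fun i : S => hS i i.2)
    ((univ_gcd_coe S).trans hgcd) hN
  rwa [prod_coe_sort S fun i => i, ← card_restricted_mem h0, Fintype.card_coe] at h

theorem card_restricted_lt_card_restricted_sub {A B : Finset ℕ} (hcard : #A = #B)
    (hA : ∀ i ∈ A, i ∣ M) (hB : ∀ i ∈ B, i ∣ M) (hgcdA : A.gcd id = 1) (hgcdB : B.gcd id = 1)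
    {q r : ℕ} (hqr : q < r) (hprod : r * ∏ i ∈ B, i ≤ q * ∏ i ∈ A, i) {t N : ℕ} (ht : t ≤ M)
    (hN : M * (r * ((#A + 1) * #A) + #A + 2) ≤ N) :
    #(Nat.Partition.restricted N (· ∈ A)) < #(Nat.Partition.restricted (N - t) (· ∈ B)) := by
  have hApos : 0 < #A := card_pos.2 (nonempty_of_gcd_eq_one hgcdA)
  have hquot : r * ((#A + 1) * #A) + #A + 2 ≤ N / M :=
    (Nat.le_div_iff_mul_le (NeZero.pos M)).2 (mul_comm M _ ▸ hN)
  obtain ⟨n, hn⟩ : ∃ n, N / M = n + (#A + 1) := Nat.exists_eq_add_of_le' (by lia)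
  have hNt : (n + #B) * M ≤ N - t := by
    have := Nat.div_mul_le_self N M
    rw [hn] at this
    rw [← hcard]
    lia
  have hupper := prod_mul_card_restricted_le hA hgcdA N
  have hlower := le_prod_mul_card_restricted hB hgcdB hNt
  rw [hn] at hupper
  rw [← hcard] at hlower
  have hMpos : 0 < M ^ #A := pow_pos (NeZero.pos M) _
  have hratio := mul_multichoose_add_lt (c := #A + 1) hApos hqr (n := n) (by lia)
  set pA := #(Nat.Partition.restricted N (· ∈ A))
  set pB := #(Nat.Partition.restricted (N - t) (· ∈ B))
  refine lt_of_mul_lt_mul_left (a := q * (M * ∏ i ∈ A, i)) ?_ (Nat.zero_le _)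
  calc q * (M * ∏ i ∈ A, i) * pA
      = q * (M * (∏ i ∈ A, i) * pA) := by ring
    _ ≤ q * (M ^ #A * (#A).multichoose (n + (#A + 1))) := by gcongr
    _ = M ^ #A * (q * (#A).multichoose (n + (#A + 1))) := by ring
    _ < M ^ #A * (r * (#A).multichoose n) := by gcongr
    _ = r * (M ^ #A * (#A).multichoose n) := by ring
    _ ≤ r * (M * (∏ i ∈ B, i) * pB) := by gcongr
    _ = M * (r * ∏ i ∈ B, i) * pB := by ring
    _ ≤ M * (q * ∏ i ∈ A, i) * pB := by gcongr
    _ = q * (M * ∏ i ∈ A, i) * pB := by ring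

theorem card_insert_erase {s k : ℕ} (hs : s ∉ S) (hk : k ∈ S) :
    #(insert s (S.erase k)) = #S := by
  rw [card_insert_of_notMem (mt mem_of_mem_erase hs), card_erase_add_one hk]

theorem mul_prod_insert_erase {s k : ℕ} (hs : s ∉ S) (hk : k ∈ S) :
    k * ∏ i ∈ insert s (S.erase k), i = s * ∏ i ∈ S, i := by
  rw [prod_insert (mt mem_of_mem_erase hs), mul_left_comm, mul_prod_erase S (fun i => i) hk]

theorem gcd_id_eq_one_of_succ_mem {b : ℕ} (hb : b ∈ S) (hb' : b + 1 ∈ S) : S.gcd id = 1 :=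
  Nat.dvd_one.1 ((Nat.dvd_add_right (gcd_dvd (f := id) hb)).1 (gcd_dvd (f := id) hb'))

end Partition

theorem card_InD_le (L s N : ℕ) :
    Nat.card {p : N.Partition // InD L s p} ≤
      #(Nat.Partition.restricted N (· ∈ Icc (s + 1) (L + s))) := by
  rw [← Nat.card_eq_finsetCard]
  refine Nat.card_mono (Set.toFinite _) fun p hp => ?_
  simpa [Nat.Partition.restricted] using hp.2

theorem card_restricted_sub_le_card_InI {L s k N : ℕ} (hs : 0 < s) (hsk : s < k) (hsN : s ≤ N) :
    #(Nat.Partition.restricted (N - s) (· ∈ insert s ((Icc (s + 1) (L + s)).erase k))) ≤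
      Nat.card {p : N.Partition // InI L s k p} := by
  rw [← Nat.card_eq_finsetCard]
  let addPart := (Nat.Partition.partitionWithPartEquiv hs hsN).symm
  refine Nat.card_le_card_of_injective (fun q => ⟨addPart q.1, (addPart q.1).2, ?_⟩) ?_
  · have hq : ∀ x ∈ q.1.parts, x = s ∨ x ≠ k ∧ s + 1 ≤ x ∧ x ≤ L + s := by
      simpa [Nat.Partition.restricted] using q.2
    rw [Nat.Partition.partitionWithPartEquiv_symm_apply_parts, Multiset.forall_mem_cons,
      Multiset.mem_cons, not_or]
    refine ⟨⟨⟨le_rfl, Nat.le_add_left _ _⟩, fun x hx => ?_⟩, hsk.ne', fun hk => ?_⟩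
    · have := hq x hx
      lia
    · have := hq k hk
      lia
  · intro p q hpq
    exact Subtype.ext (addPart.injective (Subtype.ext (Subtype.mk.inj hpq)))

theorem prodP_eq_prod_Icc (L s : ℕ) : prodP L s = ∏ i ∈ Icc (s + 1) (L + s), i := by
  rw [← Ico_add_one_right_eq_Icc, prod_Ico_eq_prod_range, prodP]
  congr 2
  lia

theorem mul_prodP_mul_le_gammaLS {L s k : ℕ} (hs : 0 < s) (hL : 3 ≤ L) (hk : k ≤ L + s) :
    s * prodP L s * (k * ((L + 1) * L) + L + 2) ≤ gammaLS L s := by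
  have hdvd : L + s ∣ prodP L s :=
    prodP_eq_prod_Icc L s ▸ dvd_prod_of_mem _ (right_mem_Icc.2 (by lia))
  have hpos : 0 < prodP L s := prod_pos fun i _ => by lia
  have hle : L + s ≤ prodP L s := Nat.le_of_dvd hpos hdvd
  have hsum : 0 < ∑ i ∈ range L, (s + 1 + i) :=
    sum_pos (fun i _ => by lia) ⟨0, mem_range.2 (by lia)⟩
  unfold gammaLS
  set P := prodP L s
  have hexp : 5 ≤ (P ^ 2 - 1) * L + 2 := by
    have : 1 ≤ P ^ 2 - 1 := by
      have : 4 * 4 ≤ P ^ 2 := by rw [sq]; gcongr <;> lia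
      lia
    nlinarith
  have hfactor : k * ((L + 1) * L) + L + 2 ≤ P ^ 3 :=
    calc k * ((L + 1) * L) + L + 2
        ≤ P * (P * L) + P * P := by
          have : k * ((L + 1) * L) ≤ P * (P * L) := by gcongr <;> lia
          have : 4 * P ≤ P * P := by gcongr; lia
          lia
      _ = P * P * (L + 1) := by ring
      _ ≤ P * P * P := by gcongr; lia
      _ = P ^ 3 := by ring
  calc s * P * (k * ((L + 1) * L) + L + 2)
      ≤ P * P * P ^ 3 := by gcongr; lia
    _ = P ^ 5 := by ring
    _ ≤ P ^ ((P ^ 2 - 1) * L + 2) := Nat.pow_le_pow_right hpos hexp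
    _ ≤ P ^ ((P ^ 2 - 1) * L + 2) + ((P ^ 2 - 1) * L - 2) * P := Nat.le_add_right _ _
    _ ≤ _ := Nat.le_mul_of_pos_left _ hsum

theorem stmt_6_general (L s k : ℕ) (hs : 0 < s) (hL : 3 ≤ L) (hk1 : s + 1 ≤ k) (hk2 : k ≤ L + s)
    (N : ℕ) (hN : s * prodP L s * (k * ((L + 1) * L) + L + 2) ≤ N) :
    Nat.card {p : N.Partition // InI L s k p} > Nat.card {p : N.Partition // InD L s p} := by
  set A := Icc (s + 1) (L + s) with hA
  set B := insert s (A.erase k) with hB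
  have hP : 0 < prodP L s := prod_pos fun i _ => by lia
  have : NeZero (s * prodP L s) := ⟨(Nat.mul_pos hs hP).ne'⟩
  have hsM : s ≤ s * prodP L s := Nat.le_mul_of_pos_right s hP
  have hsN : s ≤ N := (hsM.trans (Nat.le_mul_of_pos_right _ (by lia))).trans hN
  have hsA : s ∉ A := by simp [hA]
  have hkA : k ∈ A := mem_Icc.2 ⟨hk1, hk2⟩
  have hcardA : #A = L := by simp [hA]
  have hdvdA : ∀ i ∈ A, i ∣ s * prodP L s := fun i hi =>
    (prodP_eq_prod_Icc L s ▸ dvd_prod_of_mem (fun i => i) hi).mul_left s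
  have hdvdB : ∀ i ∈ B, i ∣ s * prodP L s :=
    (forall_mem_insert _ _ _).2 ⟨dvd_mul_right _ _, fun i hi => hdvdA i (mem_of_mem_erase hi)⟩
  have hgcdA : A.gcd id = 1 := gcd_id_eq_one_of_succ_mem (b := s + 1) (by grind) (by grind)
  have hgcdB : B.gcd id = 1 := by
    obtain rfl | hk := eq_or_ne k (s + 1)
    · exact gcd_id_eq_one_of_succ_mem (b := s + 2) (by grind) (by grind)
    · exact gcd_id_eq_one_of_succ_mem (b := s) (by grind) (by grind)
  calc Nat.card {p : N.Partition // InD L s p}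
      ≤ #(Nat.Partition.restricted N (· ∈ A)) := card_InD_le L s N
    _ < #(Nat.Partition.restricted (N - s) (· ∈ B)) :=
        card_restricted_lt_card_restricted_sub (card_insert_erase hsA hkA).symm hdvdA hdvdB hgcdA
          hgcdB hk1 (mul_prod_insert_erase hsA hkA).le hsM (hcardA.symm ▸ hN)
    _ ≤ Nat.card {p : N.Partition // InI L s k p} := card_restricted_sub_le_card_InI hs hk1 hsN

theorem stmt_6 (L s k : ℕ) (hs : 0 < s) (hL : 3 ≤ L) (hk1 : s + 1 ≤ k) (hk2 : k ≤ L + s)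
    (N : ℕ) (hN : gammaLS L s ≤ N) :
    Nat.card {p : N.Partition // InI L s k p} > Nat.card {p : N.Partition // InD L s p} :=
  stmt_6_general L s k hs hL hk1 hk2 N ((mul_prodP_mul_le_gammaLS hs hL hk2).trans hN)
end

section
/- Let L ≥ 3 and s be positive integers. Then for every integer N ≥ Γ(s), the number of partitions of N lying in C_{L,s} is at least the number of partitions of N lying in D_{L,s}. -/
/-!
Let `F_S` be the generating function of the partitions with parts in `S`, and let `M` be the
interval `{s + 1, …, L + s}` with `k` removed. The difference of the two counts is the coefficient
of the exchange series `X ^ s * F_{M ∪ {s}} - F_{M ∪ {k}}`, which for each `W ⊆ M` factors as the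
exchange series over `W` times `F_{M \ W}`.

For a suitable `W ⊆ {s + 1, k + 1}` the coefficients of the exchange series over `W` grow at least
linearly, because `s < k` makes the positive term the denser one. Only finitely many of them are
negative, and after multiplication by `F_{M \ W}` these cannot dominate at a large exponent `N`: a
partition of a number near `N` has a part of size at least `T` or `T` equal parts, and removing
these shows that such partitions are at most twice as numerous as the partitions of all numbers up
to `N - T` together, which enter the product with large positive coefficients.
-/

section

open Finset PowerSeries
open Nat.Partition (restricted)

/-- The generating function of the partitions all of whose parts lie in `S`, with integer
coefficients so that such series can be subtracted. -/
noncomputable def partGenFun (S : Finset ℕ) : ℤ⟦X⟧ :=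
  PowerSeries.mk fun n ↦ (#(restricted n (· ∈ S)) : ℤ)

@[simp]
lemma coeff_partGenFun (S : Finset ℕ) (n : ℕ) :
    coeff n (partGenFun S) = #(restricted n (· ∈ S)) :=
  coeff_mk n _

open scoped PowerSeries.WithPiTopology in
lemma hasProd_partGenFun (S : Finset ℕ) :
    HasProd (fun i ↦ if i + 1 ∈ S then ∑' j : ℕ, (X : ℤ⟦X⟧) ^ ((i + 1) * j) else 1)
      (partGenFun S) :=
  Nat.Partition.hasProd_powerSeriesMk_card_restricted ℤ (· ∈ S)

open scoped PowerSeries.WithPiTopology in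
lemma partGenFun_union {S T : Finset ℕ} (h : Disjoint S T) :
    partGenFun (S ∪ T) = partGenFun S * partGenFun T := by
  refine (hasProd_partGenFun (S ∪ T)).unique ?_
  convert (hasProd_partGenFun S).mul (hasProd_partGenFun T) using 2 with i
  by_cases hS : i + 1 ∈ S
  · simp [hS, disjoint_left.1 h hS]
  · simp [hS]

open scoped PowerSeries.WithPiTopology in
lemma partGenFun_singleton_mul_one_sub {d : ℕ} (hd : 0 < d) :
    partGenFun {d} * (1 - X ^ d) = 1 := by
  have hfactor : partGenFun {d} = ∑' j : ℕ, (X : ℤ⟦X⟧) ^ (d * j) := by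
    refine (hasProd_partGenFun {d}).unique ?_
    convert hasProd_single (d - 1) fun i hi ↦ ?_ using 1
    · simp [Nat.sub_add_cancel hd]
    · exact if_neg (by rw [mem_singleton]; lia)
  simp_rw [hfactor, pow_mul]
  exact WithPiTopology.tsum_pow_mul_one_sub_of_constantCoeff_eq_zero (by simp [hd.ne'])

section Insert

variable {d : ℕ} {T : Finset ℕ}

lemma partGenFun_insert (hT : d ∉ T) :
    partGenFun (insert d T) = partGenFun {d} * partGenFun T := by
  rw [insert_eq, partGenFun_union (disjoint_singleton_left.2 hT)]

lemma partGenFun_insert_eq_add (hd : 0 < d) (hT : d ∉ T) :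
    partGenFun (insert d T) = partGenFun T + partGenFun (insert d T) * X ^ d := by
  rw [partGenFun_insert hT]
  linear_combination partGenFun T * partGenFun_singleton_mul_one_sub hd

lemma coeff_partGenFun_insert_of_lt (hT : d ∉ T) {n : ℕ} (hn : n < d) :
    coeff n (partGenFun (insert d T)) = coeff n (partGenFun T) := by
  rw [partGenFun_insert_eq_add (by lia) hT, map_add, coeff_mul_X_pow', if_neg (by lia), add_zero]

lemma coeff_partGenFun_insert_add (hd : 0 < d) (hT : d ∉ T) (n : ℕ) :
    coeff (n + d) (partGenFun (insert d T)) =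
      coeff (n + d) (partGenFun T) + coeff n (partGenFun (insert d T)) := by
  conv_lhs => rw [partGenFun_insert_eq_add hd hT, map_add, coeff_mul_X_pow]

lemma coeff_partGenFun_insert_add_mul (hT : d ∉ T) {r : ℕ} (hr : r < d) (q : ℕ) :
    coeff (r + d * q) (partGenFun (insert d T)) =
      ∑ j ∈ range (q + 1), coeff (r + d * j) (partGenFun T) := by
  induction q with
  | zero => simpa using coeff_partGenFun_insert_of_lt hT hr
  | succ q ih =>
    rw [sum_range_succ, ← ih, mul_add_one, ← add_assoc,
      coeff_partGenFun_insert_add (by lia) hT, add_comm]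

end Insert

lemma coeff_partGenFun_singleton {d : ℕ} (hd : 0 < d) (n : ℕ) :
    coeff n (partGenFun {d}) = if d ∣ n then 1 else 0 := by
  have hrec : partGenFun {d} = 1 + partGenFun {d} * X ^ d := by
    linear_combination partGenFun_singleton_mul_one_sub hd
  induction n using Nat.strong_induction_on with
  | _ n ih =>
    rw [hrec, map_add, coeff_one, coeff_mul_X_pow']
    rcases lt_or_ge n d with hnd | hdn
    · have : d ∣ n ↔ n = 0 := ⟨fun h ↦ Nat.eq_zero_of_dvd_of_lt h hnd, by rintro rfl; simp⟩
      simp [this, hnd.not_ge]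
    · have hn : n ≠ 0 := by lia
      simp [hdn, hn, ih (n - d) (by lia), Nat.dvd_sub_iff_left hdn]

lemma exists_dvd_add_mul_iff_modEq {a b : ℕ} (hab : a.Coprime b) (ha : 0 < a) (r : ℕ) :
    ∃ c, ∀ j, a ∣ r + b * j ↔ j ≡ c [MOD a] := by
  have : NeZero a := ⟨ha.ne'⟩
  refine ⟨(-(r : ZMod a) * (b : ZMod a)⁻¹).val, fun j ↦ ?_⟩
  rw [← ZMod.natCast_eq_zero_iff, ← ZMod.natCast_eq_natCast_iff, ZMod.natCast_val, ZMod.cast_id]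
  have hb : (b : ZMod a) * (b : ZMod a)⁻¹ = 1 := ZMod.coe_mul_inv_eq_one b hab.symm
  push_cast
  constructor <;> intro h
  · linear_combination (b : ZMod a)⁻¹ * h - j * hb
  · linear_combination (b : ZMod a) * h - r * hb

lemma exists_coeff_partGenFun_pair_eq_count {a b : ℕ} (ha : 0 < a) (hb : 0 < b)
    (hab : a.Coprime b) (hne : a ≠ b) (n : ℕ) :
    ∃ c, coeff n (partGenFun {a, b}) = Nat.count (· ≡ c [MOD a]) (n / b + 1) := by
  obtain ⟨c, hc⟩ := exists_dvd_add_mul_iff_modEq hab ha (n % b)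
  refine ⟨c, ?_⟩
  rw [pair_comm, ← Nat.mod_add_div n b,
    coeff_partGenFun_insert_add_mul (by simpa using hne.symm) (Nat.mod_lt n hb), Nat.mod_add_div]
  simp_rw [coeff_partGenFun_singleton ha, hc, Nat.count_eq_card_filter_range, card_filter]
  simp

lemma lt_mul_coeff_partGenFun_pair_add {a b : ℕ} (ha : 0 < a) (hb : 0 < b)
    (hab : a.Coprime b) (hne : a ≠ b) (n : ℕ) :
    (n : ℤ) < a * b * coeff n (partGenFun {a, b}) + a * b := by
  obtain ⟨c, hc⟩ := exists_coeff_partGenFun_pair_eq_count ha hb hab hne n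
  have hcount : n / b / a ≤ Nat.count (· ≡ c [MOD a]) (n / b + 1) := by
    rw [Nat.count_modEq_card _ ha]
    exact (Nat.div_le_div_right (Nat.le_succ _)).trans (Nat.le_add_right _ _)
  rw [Nat.div_div_eq_div_mul, mul_comm b a] at hcount
  have hdiv : n < a * b * (n / (a * b) + 1) := Nat.lt_mul_div_succ n (by positivity)
  rw [hc]
  exact_mod_cast hdiv.trans_le (by rw [mul_add_one]; gcongr)

lemma mul_coeff_partGenFun_pair_le {a b : ℕ} (ha : 0 < a) (hb : 0 < b)
    (hab : a.Coprime b) (hne : a ≠ b) (n : ℕ) :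
    a * b * coeff n (partGenFun {a, b}) ≤ n + a * b := by
  obtain ⟨c, hc⟩ := exists_coeff_partGenFun_pair_eq_count ha hb hab hne n
  have hcount : Nat.count (· ≡ c [MOD a]) (n / b + 1) ≤ n / b / a + 1 := by
    rw [Nat.count_modEq_card _ ha, Nat.succ_div]
    split_ifs with hdvd hlt
    · simp [Nat.mod_eq_zero_of_dvd hdvd] at hlt
    all_goals lia
  rw [Nat.div_div_eq_div_mul, mul_comm b a] at hcount
  have hdiv : a * b * (n / (a * b)) ≤ n := Nat.mul_div_le n (a * b)
  rw [hc]
  exact_mod_cast (Nat.mul_le_mul_left (a * b) hcount).trans (by lia)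

section Growth

variable {d : ℕ} {T : Finset ℕ} {b c : ℤ}

lemma mul_coeff_partGenFun_insert_le_of_const (hT : d ∉ T) (hd : 0 < d) (hc : 0 ≤ c)
    (h : ∀ n, coeff n (partGenFun T) ≤ c) (n : ℕ) :
    d * coeff n (partGenFun (insert d T)) ≤ c * (n + d) := by
  induction n using Nat.strong_induction_on with
  | _ n ih =>
    rcases lt_or_ge n d with hnd | hdn
    · rw [coeff_partGenFun_insert_of_lt hT hnd]
      nlinarith [h n]
    · obtain ⟨m, rfl⟩ := Nat.exists_eq_add_of_le' hdn
      rw [coeff_partGenFun_insert_add hd hT]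
      push_cast
      nlinarith [h (m + d), ih m (by lia)]

lemma le_mul_coeff_partGenFun_insert_of_linear (hT : d ∉ T) (hd : 0 < d) (hb : 0 ≤ b)
    (h : ∀ n : ℕ, n - b ≤ c * coeff n (partGenFun T)) (n : ℕ) :
    n ^ 2 - 2 * b * (n + d) ≤ 2 * d * c * coeff n (partGenFun (insert d T)) := by
  induction n using Nat.strong_induction_on with
  | _ n ih =>
    rcases lt_or_ge n d with hnd | hdn
    · rw [coeff_partGenFun_insert_of_lt hT hnd]
      zify at hnd
      nlinarith [h n, mul_nonneg hb n.cast_nonneg]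
    · obtain ⟨m, rfl⟩ := Nat.exists_eq_add_of_le' hdn
      rw [coeff_partGenFun_insert_add hd hT]
      push_cast
      have := h (m + d)
      push_cast at this
      nlinarith [ih m (by lia)]

lemma mul_coeff_partGenFun_insert_le_of_linear (hT : d ∉ T) (hd : 0 < d) (hb : 0 ≤ b)
    (h : ∀ n : ℕ, c * coeff n (partGenFun T) ≤ n + b) (n : ℕ) :
    2 * d * c * coeff n (partGenFun (insert d T)) ≤ (n + d) * (n + 2 * b + d) := by
  induction n using Nat.strong_induction_on with
  | _ n ih =>
    rcases lt_or_ge n d with hnd | hdn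
    · rw [coeff_partGenFun_insert_of_lt hT hnd]
      zify at hnd
      nlinarith [h n, mul_nonneg hb n.cast_nonneg]
    · obtain ⟨m, rfl⟩ := Nat.exists_eq_add_of_le' hdn
      rw [coeff_partGenFun_insert_add hd hT]
      push_cast
      have := h (m + d)
      push_cast at this
      nlinarith [ih m (by lia)]

end Growth

/-! ### Peeling off large blocks -/

open Classical in
-- After removing a block, the sum of what remains determines the sum of the block, hence the block.
lemma card_filter_exists_block_le (S : Finset ℕ) (n T : ℕ) {𝓑 : Set (Multiset ℕ)}
    (hsum : ∀ t ∈ 𝓑, T ≤ t.sum) (hinj : 𝓑.InjOn Multiset.sum) :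
    #{p ∈ restricted n (· ∈ S) | ∃ t ∈ 𝓑, t ≤ p.parts} ≤
      ∑ v ∈ range (n - T + 1), #(restricted v (· ∈ S)) := by
  rw [← card_sigma]
  choose! block hblock hle using
    fun (p : n.Partition) (h : ∃ t ∈ 𝓑, t ≤ p.parts) ↦ h
  let rest (p : n.Partition) : (v : ℕ) × v.Partition :=
    ⟨_, p.parts - block p, fun hi ↦ p.parts_pos (Multiset.mem_of_le tsub_le_self hi), rfl⟩
  have hadd {p : n.Partition} (h : ∃ t ∈ 𝓑, t ≤ p.parts) :
      p.parts - block p + block p = p.parts := tsub_add_cancel_of_le (hle p h)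
  have hsum_rest {p : n.Partition} (h : ∃ t ∈ 𝓑, t ≤ p.parts) :
      (p.parts - block p).sum + (block p).sum = n := by
    rw [← Multiset.sum_add, hadd h, p.parts_sum]
  refine card_le_card_of_injOn rest (fun p hp ↦ ?_) fun p hp q hq hpq ↦ ?_
  · obtain ⟨hS, hex⟩ := mem_filter.1 hp
    have hT := hsum _ (hblock p hex)
    have hn := hsum_rest hex
    simp only [restricted, mem_filter, mem_univ, true_and, SetLike.mem_coe, mem_sigma, mem_range]
      at hS ⊢
    exact ⟨by lia, fun i hi ↦ hS i (Multiset.mem_of_le tsub_le_self hi)⟩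
  · have hp' := (mem_filter.1 hp).2
    have hq' := (mem_filter.1 hq).2
    have hrest : p.parts - block p = q.parts - block q := congrArg (·.2.parts) hpq
    have hblocks : block p = block q := hinj (hblock p hp') (hblock q hq') <| by
      have hp_sum := hsum_rest hp'
      have hq_sum := hsum_rest hq'
      rw [hrest] at hp_sum
      lia
    rw [Nat.Partition.ext_iff, ← hadd hp', ← hadd hq', hrest, hblocks]

lemma exists_le_mem_or_le_count_of_pow_three_le_sum {T : ℕ} (hT : 0 < T) {m : Multiset ℕ}
    (hm : T ^ 3 ≤ m.sum) : (∃ r ∈ m, T ≤ r) ∨ ∃ i ∈ m, T ≤ m.count i := by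
  by_contra! hsmall
  obtain ⟨hpart, hcount⟩ := hsmall
  have hsupport : #m.toFinset ≤ T :=
    (card_le_card fun i hi ↦ mem_range.2 (hpart i (Multiset.mem_toFinset.1 hi))).trans_eq
      (card_range T)
  have hterm : ∀ i ∈ m.toFinset, m.count i * i ≤ T * (T - 1) := fun i hi ↦ by
    rw [Multiset.mem_toFinset] at hi
    exact Nat.mul_le_mul (hcount i hi).le (Nat.le_sub_one_of_lt (hpart i hi))
  have : m.sum < T ^ 3 := calc
    m.sum = ∑ i ∈ m.toFinset, m.count i * i := by simp [sum_multiset_count]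
    _ ≤ #m.toFinset * (T * (T - 1)) := sum_le_card_nsmul _ _ _ hterm
    _ ≤ T * (T * (T - 1)) := by gcongr
    _ < T * (T * T) := by gcongr; lia
    _ = T ^ 3 := by ring
  lia

lemma coeff_partGenFun_le_two_mul_sum (S : Finset ℕ) {T n : ℕ} (hT : 0 < T) (hn : T ^ 3 ≤ n) :
    coeff n (partGenFun S) ≤ 2 * ∑ v ∈ range (n - T + 1), coeff v (partGenFun S) := by
  classical
  let largeParts : Set (Multiset ℕ) := {t | ∃ r, T ≤ r ∧ t = {r}}
  let repeatedParts : Set (Multiset ℕ) := {t | ∃ i, 0 < i ∧ t = Multiset.replicate T i}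
  have hlarge := card_filter_exists_block_le S n T (𝓑 := largeParts)
    (by rintro _ ⟨r, hr, rfl⟩; simpa using hr)
    (by rintro _ ⟨r, -, rfl⟩ _ ⟨r', -, rfl⟩ h; simpa using h)
  have hrepeated := card_filter_exists_block_le S n T (𝓑 := repeatedParts)
    (by rintro _ ⟨i, hi, rfl⟩; simpa using Nat.le_mul_of_pos_right T hi)
    (by rintro _ ⟨i, -, rfl⟩ _ ⟨i', -, rfl⟩ h
        rw [Multiset.sum_replicate, Multiset.sum_replicate, smul_eq_mul, smul_eq_mul] at h
        rw [Nat.eq_of_mul_eq_mul_left hT h])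
  have hcover : restricted n (· ∈ S) ⊆
      {p ∈ restricted n (· ∈ S) | ∃ t ∈ largeParts, t ≤ p.parts} ∪
        {p ∈ restricted n (· ∈ S) | ∃ t ∈ repeatedParts, t ≤ p.parts} := fun p hp ↦ by
    rw [← filter_or, mem_filter]
    refine ⟨hp, ?_⟩
    obtain ⟨r, hr, hTr⟩ | ⟨i, hi, hTi⟩ :=
      exists_le_mem_or_le_count_of_pow_three_le_sum hT (hn.trans_eq p.parts_sum.symm)
    · exact .inl ⟨{r}, ⟨r, hTr, rfl⟩, Multiset.singleton_le.2 hr⟩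
    · exact .inr ⟨_, ⟨i, p.parts_pos hi, rfl⟩, Multiset.le_count_iff_replicate_le.1 hTi⟩
  have hcard := (card_le_card hcover).trans (card_union_le _ _)
  simp_rw [coeff_partGenFun]
  exact_mod_cast hcard.trans ((add_le_add hlarge hrepeated).trans_eq (two_mul _).symm)

lemma coeff_partGenFun_nonneg (S : Finset ℕ) (n : ℕ) : 0 ≤ coeff n (partGenFun S) := by
  simp

lemma neg_mul_sum_le_sum_range_mul_coeff (S : Finset ℕ) {v : ℕ → ℤ} {B T N : ℕ} (hT : 0 < T)
    (hv : ∀ n, -(B : ℤ) ≤ v n) (hN : T ^ 3 + B ≤ N) :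
    -(2 * (B : ℤ) ^ 2 * ∑ m ∈ range (N - T + 1), coeff m (partGenFun S)) ≤
      ∑ n ∈ range B, v n * coeff (N - n) (partGenFun S) := by
  set Q := ∑ m ∈ range (N - T + 1), coeff m (partGenFun S)
  have hterm : ∀ n ∈ range B, -(B : ℤ) * (2 * Q) ≤ v n * coeff (N - n) (partGenFun S) := by
    intro n hn
    have hnB := mem_range.1 hn
    have hpeel := coeff_partGenFun_le_two_mul_sum S (T := T) (n := N - n) hT (by lia)
    have hsub : ∑ m ∈ range (N - n - T + 1), coeff m (partGenFun S) ≤ Q :=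
      sum_le_sum_of_subset_of_nonneg (range_mono (by lia))
        fun m _ _ ↦ coeff_partGenFun_nonneg S m
    nlinarith [hv n, coeff_partGenFun_nonneg S (N - n)]
  have hsum := card_nsmul_le_sum _ _ _ hterm
  rw [card_range, nsmul_eq_mul] at hsum
  linarith

lemma mul_sum_le_sum_Ico_mul_coeff (S : Finset ℕ) {v : ℕ → ℤ} {c : ℤ} {T : ℕ}
    (hv : ∀ n, T ≤ n → c ≤ v n) (N : ℕ) :
    c * ∑ m ∈ range (N + 1 - T), coeff m (partGenFun S) ≤
      ∑ n ∈ Ico T (N + 1), v n * coeff (N - n) (partGenFun S) := by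
  have hreflect : ∑ n ∈ Ico T (N + 1), coeff (N - n) (partGenFun S) =
      ∑ m ∈ range (N + 1 - T), coeff m (partGenFun S) := by
    rw [sum_Ico_reflect (fun m ↦ coeff m (partGenFun S)) T le_rfl, Nat.sub_self,
      Nat.Ico_zero_eq_range]
  rw [← hreflect, mul_sum]
  exact sum_le_sum fun n hn ↦
    mul_le_mul_of_nonneg_right (hv n (mem_Ico.1 hn).1) (coeff_partGenFun_nonneg S _)

lemma coeff_mul_partGenFun_nonneg (S : Finset ℕ) {V : ℤ⟦X⟧} {R B N : ℕ} (hR : 0 < R)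
    (hV : ∀ n : ℕ, n ≤ R * coeff n V + B) (hN : (2 * B ^ 2 * R + B + 1) ^ 3 + B ≤ N) :
    0 ≤ coeff N (V * partGenFun S) := by
  -- Negative coefficients of `V` occur only below `B` and are at least `-B`; beyond `T` the
  -- coefficients are at least `2 * B ^ 2`, and the factor `2` is the one lost in peeling.
  set T := 2 * B ^ 2 * R + B + 1 with hT
  have hBT : B < T := by lia
  have hhead := neg_mul_sum_le_sum_range_mul_coeff S (v := (coeff · V)) (T := T) (by lia)
    (fun n ↦ by nlinarith [hV n]) hN
  have hmiddle : 0 ≤ ∑ n ∈ Ico B T, coeff n V * coeff (N - n) (partGenFun S) :=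
    sum_nonneg fun n hn ↦ by
      have hBn := (mem_Ico.1 hn).1
      zify at hBn
      exact mul_nonneg (by nlinarith [hV n]) (coeff_partGenFun_nonneg S _)
  have htail := mul_sum_le_sum_Ico_mul_coeff S (v := (coeff · V)) (c := 2 * (B : ℤ) ^ 2) (T := T)
    (fun n hTn ↦ by zify [hT] at hTn; nlinarith [hV n]) N
  rw [Nat.sub_add_comm (by lia : T ≤ N)] at htail
  rw [coeff_mul, Nat.sum_antidiagonal_eq_sum_range_succ
    (fun i j ↦ coeff i V * coeff j (partGenFun S)),
    ← sum_range_add_sum_Ico _ (show B ≤ N + 1 by lia),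
    ← sum_Ico_consecutive _ hBT.le (show T ≤ N + 1 by lia)]
  linarith

/-! ### Exchange series -/

/-- The exchange series of `s` and `k` over `W`: the number of partitions of `n` into parts from
`W ∪ {s}` that use the part `s`, minus the number of partitions of `n` into parts from
`W ∪ {k}`. -/
noncomputable def exchangeSeries (s k : ℕ) (W : Finset ℕ) : ℤ⟦X⟧ :=
  X ^ s * partGenFun (insert s W) - partGenFun (insert k W)

section Exchange

variable {s k : ℕ}

lemma coeff_exchangeSeries_of_lt {n : ℕ} (hn : n < s) (W : Finset ℕ) :
    coeff n (exchangeSeries s k W) = -coeff n (partGenFun (insert k W)) := by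
  rw [exchangeSeries, map_sub, coeff_X_pow_mul', if_neg hn.not_ge, zero_sub]

lemma coeff_exchangeSeries_add (W : Finset ℕ) (m : ℕ) :
    coeff (s + m) (exchangeSeries s k W) =
      coeff m (partGenFun (insert s W)) - coeff (s + m) (partGenFun (insert k W)) := by
  rw [exchangeSeries, map_sub, add_comm, coeff_X_pow_mul]

lemma exchangeSeries_union {W U : Finset ℕ} (hU : Disjoint W U) (hs : s ∉ U) (hk : k ∉ U) :
    exchangeSeries s k (W ∪ U) = exchangeSeries s k W * partGenFun U := by
  simp only [exchangeSeries]
  rw [← insert_union, ← insert_union, partGenFun_union (disjoint_insert_left.2 ⟨hs, hU⟩),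
    partGenFun_union (disjoint_insert_left.2 ⟨hk, hU⟩)]
  ring

lemma coeff_exchangeSeries_nonneg {W M : Finset ℕ} (hWM : W ⊆ M) (hs : s ∉ M) (hk : k ∉ M)
    {R B N : ℕ} (hR : 0 < R) (hW : ∀ n : ℕ, n ≤ R * coeff n (exchangeSeries s k W) + B)
    (hN : (2 * B ^ 2 * R + B + 1) ^ 3 + B ≤ N) :
    0 ≤ coeff N (exchangeSeries s k M) := by
  have hnotMem {i : ℕ} (hi : i ∉ M) : i ∉ M \ W := fun h ↦ hi (mem_sdiff.1 h).1
  rw [← union_sdiff_of_subset hWM,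
    exchangeSeries_union disjoint_sdiff (hnotMem hs) (hnotMem hk)]
  exact coeff_mul_partGenFun_nonneg _ hR hW hN

lemma le_mul_coeff_exchangeSeries_singleton (hs : 0 < s) (hk : 2 * (s * (s + 1)) ≤ k) (n : ℕ) :
    (n : ℤ) ≤ (2 * (s * (s + 1)) : ℕ) * coeff n (exchangeSeries s k {s + 1}) +
      (6 * (s * (s + 1)) : ℕ) := by
  have hk_ne : k ≠ s + 1 := by nlinarith
  have hsucc : 2 * s ≤ 2 * (s * (s + 1)) := by nlinarith
  have hupper (n : ℕ) : 2 * (s * (s + 1)) * coeff n (partGenFun (insert k {s + 1})) ≤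
      (n : ℤ) + 2 * (s * (s + 1)) := by
    have h := mul_coeff_partGenFun_insert_le_of_const (T := {s + 1}) (d := k) (c := 1)
      (by simpa using hk_ne) (by nlinarith) zero_le_one
      (fun i ↦ by rw [coeff_partGenFun_singleton s.succ_pos]; split_ifs <;> simp) n
    have hnonneg := coeff_partGenFun_nonneg (insert k {s + 1}) n
    zify at hk
    rcases hnonneg.eq_or_lt with hzero | _
    · rw [← hzero]
      positivity
    · nlinarith
  zify at hsucc
  rcases lt_or_ge n s with hns | hsn
  · rw [coeff_exchangeSeries_of_lt hns]
    zify at hns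
    push_cast
    nlinarith [hupper n]
  · obtain ⟨m, rfl⟩ := Nat.exists_eq_add_of_le hsn
    rw [coeff_exchangeSeries_add]
    have hlower := lt_mul_coeff_partGenFun_pair_add hs s.succ_pos (by simp) (by simp) m
    have hup := hupper (s + m)
    push_cast at hlower hup ⊢
    nlinarith

lemma le_mul_coeff_partGenFun_exchange_pair (hs : 0 < s) (hsk : s < k) (m : ℕ) :
    k * ((m : ℤ) ^ 2 - 2 * (s * (s + 1)) * (m + (k + 1))) ≤
      2 * (s * (s + 1)) * (k * (k + 1)) * coeff m (partGenFun {s, s + 1, k + 1}) := by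
  have h := le_mul_coeff_partGenFun_insert_of_linear (T := {s, s + 1}) (d := k + 1)
    (b := s * (s + 1)) (c := s * (s + 1)) (by grind) k.succ_pos (by positivity)
    (fun i ↦ by
      have := lt_mul_coeff_partGenFun_pair_add hs s.succ_pos (by simp) (by simp) i
      push_cast at this
      linarith) m
  rw [show ({s, s + 1, k + 1} : Finset ℕ) = insert (k + 1) {s, s + 1} by grind]
  push_cast at h
  nlinarith

lemma mul_coeff_partGenFun_exchange_pair_le (hsk : s + 2 ≤ k) (n : ℕ) :
    2 * (s * (s + 1)) * (k * (k + 1)) * coeff n (partGenFun {k, s + 1, k + 1}) ≤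
      s * ((n + (s + 1)) * ((n : ℤ) + 2 * (k * (k + 1)) + (s + 1))) := by
  have h := mul_coeff_partGenFun_insert_le_of_linear (T := {k, k + 1}) (d := s + 1)
    (b := k * (k + 1)) (c := k * (k + 1)) (by grind) s.succ_pos (by positivity)
    (fun i ↦ by
      have := mul_coeff_partGenFun_pair_le (a := k) (by lia) k.succ_pos (by simp) (by simp) i
      push_cast at this
      linarith) n
  rw [show ({k, s + 1, k + 1} : Finset ℕ) = insert (s + 1) {k, k + 1} by grind]
  push_cast at h
  nlinarith

lemma exchange_pair_head_bound {s k n : ℤ} (hn : 0 ≤ n) (hns : n < s) (hsk : s < k) :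
    n + s * ((n + (s + 1)) * (n + 2 * (k * (k + 1)) + (s + 1))) ≤ 16 * k ^ 6 := by
  have hs : 0 < s := by lia
  have hk : 0 < k := by lia
  calc
    _ ≤ k + k * ((k + k) * (k + 2 * (k * (k + k)) + k)) := by gcongr <;> lia
    _ = k + 4 * k ^ 3 + 8 * k ^ 4 := by ring
    _ ≤ k ^ 6 + 4 * k ^ 6 + 8 * k ^ 6 := by
      gcongr
      · exact le_self_pow₀ (by lia) (by simp)
      all_goals lia
    _ ≤ 16 * k ^ 6 := by linarith [pow_pos hk 6]

lemma exchange_pair_tail_bound {s k m : ℤ} (hs : 0 < s) (hsk : s + 2 ≤ k) (hm : 0 ≤ m) :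
    s + m + s * ((s + m + (s + 1)) * (s + m + 2 * (k * (k + 1)) + (s + 1))) ≤
      k * (m ^ 2 - 2 * (s * (s + 1)) * (m + (k + 1))) + 16 * k ^ 6 := by
  have hk : 3 ≤ k := by lia
  have hk0 : 0 ≤ k := by lia
  have hlinear : 1 + 2 * s * (2 * s + 1 + k * (k + 1)) + 2 * k * (s * (s + 1)) ≤ 7 * k ^ 3 := by
    calc
      _ ≤ k + 2 * k * (2 * k + k + k * (k + 1)) + 2 * k * (k * k) := by gcongr <;> lia
      _ = k + 8 * k ^ 2 + 4 * k ^ 3 := by ring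
      _ ≤ 7 * k ^ 3 := by
        nlinarith [mul_nonneg (mul_nonneg hk0 (by lia : 0 ≤ 3 * k + 1)) (sub_nonneg.2 hk)]
  have hconst : s + s * ((2 * s + 1) * (2 * s + 1 + 2 * (k * (k + 1)))) +
      2 * k * (s * (s + 1)) * (k + 1) ≤ 9 * k ^ 6 := by
    calc
      _ ≤ k + k * ((2 * k + k) * (2 * k + k + 2 * (k * (k + k)))) + 2 * k * (k * k) * (k + k) := by
        gcongr <;> lia
      _ = k + 9 * k ^ 3 + 16 * k ^ 4 := by ring
      _ ≤ k ^ 4 + 9 * k ^ 4 + 16 * k ^ 4 := by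
        gcongr
        · exact le_self_pow₀ (by lia) (by simp)
        all_goals lia
      _ ≤ 9 * (3 ^ 2 * k ^ 4) := by linarith [pow_nonneg hk0 4]
      _ ≤ 9 * (k ^ 2 * k ^ 4) := by gcongr
      _ = 9 * k ^ 6 := by ring
  have hquadratic : 2 * m ^ 2 ≤ (k - s) * m ^ 2 := by gcongr; lia
  nlinarith [mul_le_mul_of_nonneg_right hlinear hm, sq_nonneg (4 * m - 7 * k ^ 3)]

lemma le_mul_coeff_exchangeSeries_pair (hs : 0 < s) (hsk : s + 2 ≤ k) (n : ℕ) :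
    (n : ℤ) ≤ (2 * (s * (s + 1)) * (k * (k + 1)) : ℕ) *
      coeff n (exchangeSeries s k {s + 1, k + 1}) + (16 * k ^ 6 : ℕ) := by
  have hupper := mul_coeff_partGenFun_exchange_pair_le hsk n
  have hs' : (0 : ℤ) < s := by exact_mod_cast hs
  have hsk' : (s : ℤ) + 2 ≤ k := by exact_mod_cast hsk
  push_cast
  rcases lt_or_ge n s with hns | hsn
  · rw [coeff_exchangeSeries_of_lt hns]
    have := exchange_pair_head_bound n.cast_nonneg (by exact_mod_cast hns) (by lia : (s : ℤ) < k)
    linarith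
  · obtain ⟨m, rfl⟩ := Nat.exists_eq_add_of_le hsn
    rw [coeff_exchangeSeries_add]
    have hlower := le_mul_coeff_partGenFun_exchange_pair hs (by lia : s < k) m
    have := exchange_pair_tail_bound hs' hsk' m.cast_nonneg
    push_cast at hupper ⊢
    linarith

lemma threshold_le_pow {t R B : ℕ} (ht : 2 ≤ t) (hR : R ≤ t ^ 9) (hB : B ≤ t ^ 22) :
    (2 * B ^ 2 * R + B + 1) ^ 3 + B ≤ t ^ 200 := by
  have hone {i : ℕ} : 1 ≤ t ^ i := Nat.one_le_pow _ _ (by lia)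
  have hmono {i j : ℕ} (h : i ≤ j) : t ^ i ≤ t ^ j := Nat.pow_le_pow_right (by lia) h
  have hdouble {i : ℕ} : 2 * t ^ i ≤ t ^ (i + 1) := by rw [pow_succ']; gcongr
  calc
    (2 * B ^ 2 * R + B + 1) ^ 3 + B ≤ (2 * (t ^ 22) ^ 2 * t ^ 9 + t ^ 22 + 1) ^ 3 + t ^ 22 := by
      gcongr
    _ = (2 * t ^ 53 + t ^ 22 + 1) ^ 3 + t ^ 22 := by ring
    _ ≤ (2 * t ^ 53 + t ^ 53 + t ^ 53) ^ 3 + t ^ 165 := by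
      gcongr <;> first | exact hone | lia
    _ = 64 * t ^ 159 + t ^ 165 := by ring
    _ = 2 ^ 6 * t ^ 159 + t ^ 165 := by norm_num
    _ ≤ t ^ 6 * t ^ 159 + t ^ 165 := by gcongr
    _ = 2 * t ^ 165 := by ring
    _ ≤ t ^ 166 := hdouble
    _ ≤ t ^ 200 := hmono (by simp)

lemma exists_exchangeSeries_linear_lower_bound (hs : 0 < s) (hsk : s + 2 ≤ k) :
    ∃ W ⊆ {s + 1, k + 1}, ∃ R B : ℕ, 0 < R ∧
      (∀ n : ℕ, n ≤ R * coeff n (exchangeSeries s k W) + B) ∧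
      (2 * B ^ 2 * R + B + 1) ^ 3 + B ≤ (s + 1) ^ 200 := by
  have hbase : 2 ≤ s + 1 := by lia
  have hprod : s * (s + 1) ≤ (s + 1) ^ 2 := by nlinarith
  -- The threshold must not depend on `k`, so both parts of the pair are used only for small `k`.
  rcases le_or_gt (2 * (s * (s + 1))) k with hlarge | hsmall
  · refine ⟨{s + 1}, by simp, _, _, by positivity,
      le_mul_coeff_exchangeSeries_singleton hs hlarge, threshold_le_pow hbase ?_ ?_⟩
    · calc
        2 * (s * (s + 1)) ≤ (s + 1) * (s + 1) ^ 2 := by gcongr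
        _ = (s + 1) ^ 3 := by ring
        _ ≤ (s + 1) ^ 9 := Nat.pow_le_pow_right (by lia) (by simp)
    · calc
        6 * (s * (s + 1)) ≤ 2 ^ 3 * (s * (s + 1)) := by lia
        _ ≤ (s + 1) ^ 3 * (s + 1) ^ 2 := by gcongr
        _ = (s + 1) ^ 5 := by ring
        _ ≤ (s + 1) ^ 22 := Nat.pow_le_pow_right (by lia) (by simp)
  · have hk : k + 1 ≤ (s + 1) ^ 3 := calc
      k + 1 ≤ 2 * (s * (s + 1)) := hsmall
      _ ≤ (s + 1) * (s + 1) ^ 2 := by gcongr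
      _ = (s + 1) ^ 3 := by ring
    refine ⟨{s + 1, k + 1}, subset_rfl, _, _,
      Nat.mul_pos (by positivity) (Nat.mul_pos (by lia) k.succ_pos),
      le_mul_coeff_exchangeSeries_pair hs hsk, threshold_le_pow hbase ?_ ?_⟩
    · calc
        2 * (s * (s + 1)) * (k * (k + 1)) ≤
            (s + 1) * (s + 1) ^ 2 * ((s + 1) ^ 3 * (s + 1) ^ 3) := by gcongr; lia
        _ = (s + 1) ^ 9 := by ring
    · calc
        16 * k ^ 6 ≤ 2 ^ 4 * ((s + 1) ^ 3) ^ 6 := by gcongr <;> lia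
        _ ≤ (s + 1) ^ 4 * ((s + 1) ^ 3) ^ 6 := by gcongr
        _ = (s + 1) ^ 22 := by ring

end Exchange

/-! ### Partition counts as coefficients -/

lemma card_partition_mem_eq_coeff (S : Finset ℕ) (n : ℕ) :
    Nat.card {p : n.Partition // ∀ i ∈ p.parts, i ∈ S} = coeff n (partGenFun S) := by
  rw [coeff_partGenFun, restricted, Nat.card_eq_fintype_card, Fintype.card_subtype]

lemma card_partition_mem_part_eq_coeff {d : ℕ} {S : Finset ℕ} (hd : 0 < d) (hdS : d ∈ S) (n : ℕ) :
    Nat.card {p : n.Partition // d ∈ p.parts ∧ ∀ i ∈ p.parts, i ∈ S} =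
      coeff n (X ^ d * partGenFun S : ℤ⟦X⟧) := by
  rw [coeff_X_pow_mul']
  split_ifs with hdn
  · rw [← card_partition_mem_eq_coeff]
    refine congrArg Nat.cast (Nat.card_congr ?_)
    refine (Equiv.subtypeSubtypeEquivSubtypeInter _ _).symm.trans
      ((Nat.Partition.partitionWithPartEquiv hd hdn).symm.subtypeEquiv fun q ↦ ?_).symm
    simp [hdS]
  · have : IsEmpty {p : n.Partition // d ∈ p.parts ∧ ∀ i ∈ p.parts, i ∈ S} :=
      ⟨fun p ↦ hdn ((Multiset.le_sum_of_mem p.2.1).trans_eq p.1.parts_sum)⟩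
    simp

lemma card_InD_le_coeff (L s N : ℕ) :
    Nat.card {p : N.Partition // InD L s p} ≤ coeff N (partGenFun (Icc (s + 1) (L + s))) := by
  rw [← card_partition_mem_eq_coeff]
  exact Nat.cast_le.2 (Nat.card_le_card_of_injective _
    (Subtype.impEmbedding _ _ fun p (hp : InD L s p) i hi ↦ mem_Icc.2 (hp.2 i hi)).injective)

lemma card_InI_eq_coeff {L s k : ℕ} (hs : 0 < s) (hsk : s ≠ k) (N : ℕ) :
    Nat.card {p : N.Partition // InI L s k p} =
      coeff N (X ^ s * partGenFun ((Icc s (L + s)).erase k) : ℤ⟦X⟧) := by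
  rw [← card_partition_mem_part_eq_coeff hs (by simp [hsk])]
  refine congrArg Nat.cast (Nat.card_congr (Equiv.subtypeEquivRight fun p ↦ and_congr_right' ?_))
  simp only [mem_erase, mem_Icc]
  exact ⟨fun ⟨hle, hk⟩ i hi ↦ ⟨ne_of_mem_of_not_mem hi hk, hle i hi⟩,
    fun h ↦ ⟨fun i hi ↦ (h i hi).2, fun hk ↦ (h k hk).1 rfl⟩⟩

lemma coeff_exchangeSeries_le_card_sub_card {L s k : ℕ} (hs : 0 < s) (hsk : s < k)
    (hkL : k ≤ L + s) (N : ℕ) :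
    coeff N (exchangeSeries s k ((Icc (s + 1) (L + s)).erase k)) ≤
      Nat.card {p : N.Partition // InI L s k p} - Nat.card {p : N.Partition // InD L s p} := by
  have hinsert_s : insert s ((Icc (s + 1) (L + s)).erase k) = (Icc s (L + s)).erase k := by
    ext i
    simp only [mem_insert, mem_erase, mem_Icc]
    lia
  have hinsert_k : insert k ((Icc (s + 1) (L + s)).erase k) = Icc (s + 1) (L + s) :=
    insert_erase (mem_Icc.2 ⟨hsk, hkL⟩)
  rw [exchangeSeries, hinsert_s, hinsert_k, map_sub, card_InI_eq_coeff hs hsk.ne]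
  exact sub_le_sub_left (card_InD_le_coeff L s N) _

lemma pow_le_GammaS {s : ℕ} (hs : 0 < s) : (s + 1) ^ 200 ≤ GammaS s := by
  have hprod : (s + 1) ^ (3 * s + 2) ≤ prodP (3 * s + 2) s := by
    simpa [prodP] using pow_card_le_prod (range (3 * s + 2)) (fun i ↦ s + 1 + i) (s + 1)
      fun i _ ↦ Nat.le_add_right _ i
  have hbase : s + 1 ≤ prodP (3 * s + 2) s := (Nat.le_self_pow (by lia) _).trans hprod
  have hP : 32 ≤ prodP (3 * s + 2) s := calc
    32 = 2 ^ 5 := rfl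
    _ ≤ (s + 1) ^ 5 := Nat.pow_le_pow_left (by lia) 5
    _ ≤ (s + 1) ^ (3 * s + 2) := Nat.pow_le_pow_right (by lia) (by lia)
    _ ≤ prodP (3 * s + 2) s := hprod
  have hexp : 200 ≤ (prodP (3 * s + 2) s ^ 2 - 1) * (3 * s + 2) + 2 := by
    have : 32 ^ 2 ≤ prodP (3 * s + 2) s ^ 2 := Nat.pow_le_pow_left hP 2
    have := Nat.mul_le_mul_left (prodP (3 * s + 2) s ^ 2 - 1) (show 1 ≤ 3 * s + 2 by lia)
    lia
  have hsum : 0 < ∑ i ∈ range (3 * s + 2), (s + 1 + i) :=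
    sum_pos (fun i _ ↦ by lia) ⟨0, by simp⟩
  calc
    (s + 1) ^ 200 ≤ prodP (3 * s + 2) s ^ 200 := Nat.pow_le_pow_left hbase 200
    _ ≤ prodP (3 * s + 2) s ^ ((prodP (3 * s + 2) s ^ 2 - 1) * (3 * s + 2) + 2) :=
      Nat.pow_le_pow_right (by lia) hexp
    _ ≤ GammaS s := (Nat.le_add_right _ _).trans (Nat.le_mul_of_pos_left _ hsum)

theorem stmt_7_general (L s k : ℕ) (hs : 0 < s) (hsk : s + 2 ≤ k) (hkL : k < L + s)
    (N : ℕ) (hN : (s + 1) ^ 200 ≤ N) :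
    Nat.card {p : N.Partition // InI L s k p} ≥ Nat.card {p : N.Partition // InD L s p} := by
  obtain ⟨W, hW, R, B, hR, hlinear, hthreshold⟩ := exists_exchangeSeries_linear_lower_bound hs hsk
  have hWM : W ⊆ (Icc (s + 1) (L + s)).erase k := hW.trans <| by
    simp only [insert_subset_iff, singleton_subset_iff, mem_erase, mem_Icc]
    lia
  have hnonneg := coeff_exchangeSeries_nonneg hWM (by simp) (by simp) hR hlinear
    (hthreshold.trans hN)
  have hdiff := coeff_exchangeSeries_le_card_sub_card hs (by lia) hkL.le N
  lia

end

theorem stmt_7 (L s : ℕ) (hs : 0 < s) (hL : 3 ≤ L)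
    (N : ℕ) (hN : GammaS s ≤ N) :
    Nat.card {p : N.Partition // InC L s p} ≥ Nat.card {p : N.Partition // InD L s p} :=
  stmt_7_general L s (L + s - 1) hs (by lia) (by lia) N ((pow_le_GammaS hs).trans hN)
end
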